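/- arXiv:1306.3598 — 4 statements merged into one kernel-verified Lean document; each statement's English description precedes it below -/
import Mathlib

section
/- Let μ be a compactly supported Borel measure on ℝ^d, d ≥ 2. Then there is a constant c_d > 0, depending only on d, such that ∫_{ℝ^d} |μ̂(ξ)|² ( ∫_{O(d)} |μ̂(gξ)|² dg ) dξ = c_d ∫_0^∞ ( ∫_{S^{d−1}} |μ̂(tω)|² dω )² t^{d−1} dt; that is, the group-theoretic quantity on the left equals a constant multiple of the Mattila integral of μ. -/
open MeasureTheory Metric Set Topology
open scoped ENNReal

noncomputable section

/-- `ℝ^d` as Euclidean space. -/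
abbrev Pt (d : ℕ) := EuclideanSpace ℝ (Fin d)

/-- The Fourier transform `μ̂(ξ) = ∫ e^{-2πi x·ξ} dμ(x)` of a measure `μ` on `ℝ^d`. -/
def ftM (d : ℕ) (μ : Measure (Pt d)) (ξ : Pt d) : ℂ :=
  ∫ x, Complex.exp ((-(2 * Real.pi * (inner ℝ x ξ : ℝ)) : ℝ) * Complex.I) ∂μ

/-- The `s`-energy `I_s(μ) = ∬ |x-y|^{-s} dμ(x) dμ(y)` of a measure `μ`. -/
def energy (d : ℕ) (s : ℝ) (μ : Measure (Pt d)) : ℝ≥0∞ :=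
  ∫⁻ x, ∫⁻ y, edist x y ^ (-s) ∂μ ∂μ

/-- The surface measure `dω` on the unit sphere `S^{d-1} ⊆ ℝ^d`. -/
def sphM (d : ℕ) : Measure (sphere (0 : Pt d) 1) :=
  (volume : Measure (Pt d)).toSphere

/-- The spherical `L²` average `∫_{S^{d-1}} |μ̂(tω)|² dω` (as a lower integral). -/
def sphAvg (d : ℕ) (μ : Measure (Pt d)) (t : ℝ) : ℝ≥0∞ :=
  ∫⁻ ω, (‖ftM d μ (t • (ω : Pt d))‖₊ : ℝ≥0∞) ^ 2 ∂(sphM d)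

/-- The orthogonal group `O(d)` of `ℝ^d`, as a group of matrices. -/
abbrev OG (d : ℕ) : Type := Matrix.orthogonalGroup (Fin d) ℝ

/-- `O(d)` carries the Borel σ-algebra of its (matrix) topology. -/
instance (d : ℕ) : MeasurableSpace (OG d) := borel _

instance (d : ℕ) : BorelSpace (OG d) := ⟨rfl⟩

/-- The action of a `d × d` matrix on `ℝ^d`. -/
def act (d : ℕ) (g : Matrix (Fin d) (Fin d) ℝ) (v : Pt d) : Pt d :=
  (EuclideanSpace.equiv (Fin d) ℝ).symm (g.mulVec (EuclideanSpace.equiv (Fin d) ℝ v))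

/-- The Mattila integral `∫_0^∞ (∫_{S^{d-1}} |μ̂(tω)|² dω)² t^{d-1} dt`. -/
def mattila (d : ℕ) (μ : Measure (Pt d)) : ℝ≥0∞ :=
  ∫⁻ t in Ioi (0 : ℝ), (sphAvg d μ t) ^ 2 * ENNReal.ofReal (t ^ ((d : ℝ) - 1))

/-!
In polar coordinates `ξ = tω` the left-hand side is `∫_0^∞ ∫_S |μ̂(tω)|² A(tω) dω t^{d-1} dt` with
`A(ξ) = ∫_{O(d)} |μ̂(gξ)|² dg`. The sphere `S` is a homogeneous space of `O(d)` with invariant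
measure `dω`, so `A(tω)` does not depend on `ω` and equals the mean of `|μ̂(t·)|²` over `S`. This
gives the identity with `c_d = |S|⁻¹`.

To identify the group average with the mean over a homogeneous space, note that left invariance
makes `∫ f(g⁻¹x) dg` constant in `x`; integrating over `x` and using Fubini computes the constant.
For `G` acting on itself this shows that a finite left-invariant measure is inversion invariant,
so that `g⁻¹` may be replaced by `g`.
-/

section HomogeneousSpace

variable {G X : Type*} [Group G] [MeasurableSpace G] [MulAction G X]
  [MulAction.IsPretransitive G X]

lemma lintegral_inv_smul_congr [MeasurableMul G] (μ : Measure G) [μ.IsMulLeftInvariant]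
    (f : X → ℝ≥0∞) (x y : X) : ∫⁻ g, f (g⁻¹ • x) ∂μ = ∫⁻ g, f (g⁻¹ • y) ∂μ := by
  obtain ⟨h, rfl⟩ := MulAction.exists_smul_eq G x y
  simpa only [mul_inv_rev, inv_inv, mul_smul] using
    (lintegral_mul_left_eq_self (μ := μ) (fun g ↦ f (g⁻¹ • x)) h⁻¹).symm

variable [MeasurableMul₂ G] [MeasurableInv G]

section

variable [MeasurableSpace X] [MeasurableSMul₂ G X]

lemma lintegral_inv_smul_mul_measure_univ (μ : Measure G) [SFinite μ] [μ.IsMulLeftInvariant]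
    (σ : Measure X) [SFinite σ] [SMulInvariantMeasure G X σ] {f : X → ℝ≥0∞} (hf : Measurable f)
    (x : X) : (∫⁻ g, f (g⁻¹ • x) ∂μ) * σ univ = μ univ * ∫⁻ y, f y ∂σ :=
  calc (∫⁻ g, f (g⁻¹ • x) ∂μ) * σ univ
      = ∫⁻ y, ∫⁻ g, f (g⁻¹ • y) ∂μ ∂σ := by
        rw [← lintegral_const]
        exact lintegral_congr fun y ↦ lintegral_inv_smul_congr μ f x y
    _ = ∫⁻ g, ∫⁻ y, f (g⁻¹ • y) ∂σ ∂μ := lintegral_lintegral_swap (by fun_prop)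
    _ = ∫⁻ _, ∫⁻ y, f y ∂σ ∂μ :=
        lintegral_congr fun g ↦ (measurePreserving_smul g⁻¹ σ).lintegral_comp hf
    _ = μ univ * ∫⁻ y, f y ∂σ := by rw [lintegral_const, mul_comm]

end

lemma isInvInvariant_of_isMulLeftInvariant (μ : Measure G) [IsFiniteMeasure μ]
    [μ.IsMulLeftInvariant] : μ.IsInvInvariant where
  inv_eq_self := by
    rcases eq_zero_or_neZero μ with rfl | hμ
    · exact Measure.map_zero _
    ext s hs
    have h := lintegral_inv_smul_mul_measure_univ μ μ (measurable_one.indicator hs) (1 : G)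
    rw [lintegral_indicator_one hs, mul_comm,
      ENNReal.mul_right_inj (NeZero.ne _) (measure_ne_top μ _)] at h
    rw [← h, ← lintegral_indicator_one hs, Measure.inv,
      lintegral_map (measurable_one.indicator hs) measurable_inv]
    simp only [smul_eq_mul, mul_one]

lemma lintegral_smul_mul_measure_univ [MeasurableSpace X] [MeasurableSMul₂ G X] (μ : Measure G)
    [IsFiniteMeasure μ] [μ.IsMulLeftInvariant] (σ : Measure X) [SFinite σ]
    [SMulInvariantMeasure G X σ] {f : X → ℝ≥0∞} (hf : Measurable f) (x : X) :
    (∫⁻ g, f (g • x) ∂μ) * σ univ = μ univ * ∫⁻ y, f y ∂σ := by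
  have := isInvInvariant_of_isMulLeftInvariant μ
  rw [← lintegral_inv_smul_mul_measure_univ μ σ hf x, lintegral_inv_eq_self (fun g ↦ f (g • x))]

end HomogeneousSpace

section PolarCoordinates

variable {E : Type*} [NormedAddCommGroup E] [NormedSpace ℝ E] [FiniteDimensional ℝ E]
  [MeasurableSpace E] [BorelSpace E]

lemma lintegral_eq_lintegral_Ioi_sphere [Nontrivial E] (μ : Measure E) [μ.IsAddHaarMeasure]
    {f : E → ℝ≥0∞} (hf : Measurable f) :
    ∫⁻ x, f x ∂μ = ∫⁻ t in Ioi (0 : ℝ), (∫⁻ ω, f (t • (ω : E)) ∂μ.toSphere) *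
      ENNReal.ofReal (t ^ (Module.finrank ℝ E - 1)) :=
  have hpolar : Measurable fun p : sphere (0 : E) 1 × Ioi (0 : ℝ) ↦ f ((p.2 : ℝ) • (p.1 : E)) :=
    hf.comp (by fun_prop)
  calc ∫⁻ x, f x ∂μ
      = ∫⁻ x : ({0}ᶜ : Set E), f x ∂μ.comap Subtype.val := by
        rw [lintegral_subtype_comap (measurableSet_singleton _).compl f, restrict_compl_singleton]
    _ = ∫⁻ p : sphere (0 : E) 1 × Ioi (0 : ℝ), f ((p.2 : ℝ) • (p.1 : E))
          ∂μ.toSphere.prod (.volumeIoiPow (Module.finrank ℝ E - 1)) := by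
        rw [← μ.measurePreserving_homeomorphUnitSphereProd.lintegral_comp hpolar]
        refine lintegral_congr fun x ↦ congrArg f ?_
        exact congrArg Subtype.val ((homeomorphUnitSphereProd E).symm_apply_apply x).symm
    _ = ∫⁻ t : Ioi (0 : ℝ), (∫⁻ ω, f ((t : ℝ) • (ω : E)) ∂μ.toSphere) *
          ENNReal.ofReal ((t : ℝ) ^ (Module.finrank ℝ E - 1)) ∂volume.comap Subtype.val := by
        rw [lintegral_prod_symm' _ hpolar, Measure.volumeIoiPow,
          lintegral_withDensity_eq_lintegral_mul _ (by fun_prop) hpolar.lintegral_prod_left']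
        simp only [Pi.mul_apply, mul_comm]
    _ = _ := lintegral_subtype_comap measurableSet_Ioi fun t : ℝ ↦
        (∫⁻ ω, f (t • (ω : E)) ∂μ.toSphere) * ENNReal.ofReal (t ^ (Module.finrank ℝ E - 1))

end PolarCoordinates

section IsometryGroup

open scoped Pointwise

variable {E : Type*} [NormedAddCommGroup E]

section NormedSpace

variable [NormedSpace ℝ E]

/-- The action of the linear isometries of `E` on its unit sphere. -/
instance : MulAction (E ≃ₗᵢ[ℝ] E) (sphere (0 : E) 1) where
  smul u ω := ⟨u ω, by simp⟩
  one_smul _ := rfl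
  mul_smul _ _ _ := rfl

lemma coe_smul_sphere (u : E ≃ₗᵢ[ℝ] E) (ω : sphere (0 : E) 1) : (↑(u • ω) : E) = u ω := rfl

lemma image_Ioo_smul_sphere (u : E ≃ₗᵢ[ℝ] E) (s : Set (sphere (0 : E) 1)) :
    u '' (Ioo (0 : ℝ) 1 • (Subtype.val '' s)) = Ioo (0 : ℝ) 1 • (Subtype.val '' (u • s)) :=
  calc u '' (Ioo (0 : ℝ) 1 • (Subtype.val '' s))
      = Ioo (0 : ℝ) 1 • (u '' (Subtype.val '' s)) := image_image2_distrib_right u.map_smul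
    _ = Ioo (0 : ℝ) 1 • (Subtype.val '' (u • s)) := by
        simp only [← image_smul, image_image, coe_smul_sphere]

lemma measurePreserving_smul_toSphere [MeasurableSpace E] [BorelSpace E] {μ : Measure E}
    {u : E ≃ₗᵢ[ℝ] E} (hu : MeasurePreserving u μ μ) :
    MeasurePreserving (fun ω : sphere (0 : E) 1 ↦ u • ω) μ.toSphere μ.toSphere := by
  have hmeas : Measurable fun ω : sphere (0 : E) 1 ↦ u • ω :=
    ((u.continuous.comp continuous_subtype_val).subtype_mk _).measurable
  refine ⟨hmeas, Measure.ext fun s hs ↦ ?_⟩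
  have hcone : Ioo (0 : ℝ) 1 • (Subtype.val '' ((u • ·) ⁻¹' s) : Set E) =
      u ⁻¹' (Ioo (0 : ℝ) 1 • (Subtype.val '' s)) := by
    rw [preimage_smul, ← u.injective.preimage_image (Ioo (0 : ℝ) 1 • _), image_Ioo_smul_sphere,
      smul_inv_smul]
  rw [Measure.map_apply hmeas hs, Measure.toSphere_apply' _ (hmeas hs),
    Measure.toSphere_apply' _ hs, hcone,
    hu.measure_preimage_emb u.toHomeomorph.measurableEmbedding]

end NormedSpace

instance [InnerProductSpace ℝ E] :
    MulAction.IsPretransitive (E ≃ₗᵢ[ℝ] E) (sphere (0 : E) 1) where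
  exists_smul_eq v w :=
    ⟨(ℝ ∙ ((v : E) - w))ᗮ.reflection, Subtype.ext <| Submodule.reflection_sub <| by simp⟩

end IsometryGroup

section OrthogonalGroup

variable {d : ℕ}

/-- The identification of orthogonal matrices with linear isometries of `ℝ^d`. -/
def orthogonalGroupEquiv (d : ℕ) : OG d ≃* (Pt d ≃ₗᵢ[ℝ] Pt d) :=
  let matrixEquiv : Matrix (Fin d) (Fin d) ℝ ≃⋆* (Pt d →L[ℝ] Pt d) :=
    { (Matrix.toEuclideanCLM (n := Fin d) (𝕜 := ℝ)).toMulEquiv with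
      map_star' := map_star (Matrix.toEuclideanCLM (n := Fin d) (𝕜 := ℝ)) }
  (Unitary.mapEquiv matrixEquiv).toMulEquiv.trans Unitary.linearIsometryEquiv

lemma orthogonalGroupEquiv_apply (g : OG d) (v : Pt d) :
    orthogonalGroupEquiv d g v = act d g v := rfl

/-- The action of `O(d)` on the unit sphere of `ℝ^d` by matrix-vector multiplication. -/
instance : MulAction (OG d) (sphere (0 : Pt d) 1) :=
  MulAction.compHom _ (orthogonalGroupEquiv d).toMonoidHom

lemma coe_OG_smul_sphere (g : OG d) (ω : sphere (0 : Pt d) 1) :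
    (↑(g • ω) : Pt d) = act d g ω :=
  orthogonalGroupEquiv_apply g ω

lemma act_smul (g : OG d) (t : ℝ) (v : Pt d) : act d g (t • v) = t • act d g v := by
  simp only [← orthogonalGroupEquiv_apply, map_smul]

lemma continuous_act : Continuous fun p : OG d × Pt d ↦ act d p.1 p.2 := by
  unfold act
  fun_prop

instance : SecondCountableTopology (OG d) :=
  inferInstanceAs <| SecondCountableTopology
    {g : Fin d → Fin d → ℝ // g ∈ Matrix.orthogonalGroup (Fin d) ℝ}

instance : ContinuousSMul (OG d) (sphere (0 : Pt d) 1) where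
  continuous_smul := (continuous_act.comp (by fun_prop :
    Continuous fun p : OG d × sphere (0 : Pt d) 1 ↦ (p.1, (p.2 : Pt d)))).subtype_mk _

instance : MulAction.IsPretransitive (OG d) (sphere (0 : Pt d) 1) :=
  .of_smul_eq (orthogonalGroupEquiv d).symm fun {u ω} ↦
    congrArg (· • ω) ((orthogonalGroupEquiv d).apply_symm_apply u)

instance : SMulInvariantMeasure (OG d) (sphere (0 : Pt d) 1) (sphM d) where
  measure_preimage_smul g _ hs := (measurePreserving_smul_toSphere
    (orthogonalGroupEquiv d g).measurePreserving).measure_preimage hs.nullMeasurableSet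

instance : IsFiniteMeasure (sphM d) := by
  unfold sphM
  infer_instance

lemma sphM_univ_ne_zero [NeZero d] : sphM d univ ≠ 0 :=
  Measure.measure_univ_ne_zero.2 <| Measure.toSphere_ne_zero _

lemma lintegral_act_smul_sphere [NeZero d] {f : Pt d → ℝ≥0∞} (hf : Measurable f)
    (dg : Measure (OG d)) [IsProbabilityMeasure dg] [dg.IsMulLeftInvariant]
    (t : ℝ) (ω : sphere (0 : Pt d) 1) :
    ∫⁻ g : OG d, f (act d g (t • (ω : Pt d))) ∂dg =
      (sphM d univ)⁻¹ * ∫⁻ ω, f (t • (ω : Pt d)) ∂sphM d := by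
  have havg := lintegral_smul_mul_measure_univ dg (sphM d)
    (f := fun ω ↦ f (t • (ω : Pt d))) (hf.comp (by fun_prop)) ω
  rw [measure_univ (μ := dg), one_mul] at havg
  simp only [← havg, act_smul, coe_OG_smul_sphere]
  rw [mul_comm, ENNReal.mul_inv_cancel_right sphM_univ_ne_zero (measure_ne_top _ _)]

theorem lintegral_mul_lintegral_act [NeZero d] {f h : Pt d → ℝ≥0∞} (hf : Measurable f)
    (hh : Measurable h) (dg : Measure (OG d)) [IsProbabilityMeasure dg] [dg.IsMulLeftInvariant] :
    ∫⁻ ξ, f ξ * ∫⁻ g : OG d, h (act d g ξ) ∂dg =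
      (sphM d univ)⁻¹ * ∫⁻ t in Ioi (0 : ℝ), (∫⁻ ω, f (t • (ω : Pt d)) ∂sphM d) *
        (∫⁻ ω, h (t • (ω : Pt d)) ∂sphM d) * ENNReal.ofReal (t ^ (d - 1)) := by
  have havg : Measurable fun ξ ↦ ∫⁻ g : OG d, h (act d g ξ) ∂dg :=
    (hh.comp continuous_act.measurable).lintegral_prod_left'
  calc ∫⁻ ξ, f ξ * ∫⁻ g : OG d, h (act d g ξ) ∂dg
      = ∫⁻ t in Ioi (0 : ℝ), (∫⁻ ω, f (t • (ω : Pt d)) *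
          ∫⁻ g : OG d, h (act d g (t • (ω : Pt d))) ∂dg ∂sphM d) *
            ENNReal.ofReal (t ^ (d - 1)) := by
        simpa only [sphM, finrank_euclideanSpace_fin, Pi.mul_apply] using
          lintegral_eq_lintegral_Ioi_sphere volume (hf.mul havg)
    _ = ∫⁻ t in Ioi (0 : ℝ), (sphM d univ)⁻¹ * ((∫⁻ ω, f (t • (ω : Pt d)) ∂sphM d) *
          (∫⁻ ω, h (t • (ω : Pt d)) ∂sphM d) * ENNReal.ofReal (t ^ (d - 1))) := by
        refine lintegral_congr fun t ↦ ?_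
        have hft : Measurable fun ω : sphere (0 : Pt d) 1 ↦ f (t • (ω : Pt d)) :=
          hf.comp (by fun_prop)
        simp only [lintegral_act_smul_sphere hh, lintegral_mul_const _ hft]
        ring
    _ = _ := lintegral_const_mul' _ _ (ENNReal.inv_ne_top.2 sphM_univ_ne_zero)

end OrthogonalGroup

section Mattila

variable {d : ℕ} (μ : Measure (Pt d)) [IsFiniteMeasure μ]

lemma continuous_ftM : Continuous (ftM d μ) := by
  refine continuous_of_dominated (bound := fun _ ↦ 1) (fun ξ ↦ ?_) (fun ξ ↦ ?_)
    (integrable_const _) ?_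
  · exact Continuous.aestronglyMeasurable (by fun_prop)
  · exact .of_forall fun x ↦ (Complex.norm_exp_ofReal_mul_I _).le
  · exact .of_forall fun x ↦ by fun_prop

theorem stmt10_general [NeZero d] (dg : Measure (OG d)) [IsProbabilityMeasure dg]
    [dg.IsMulLeftInvariant] :
    ∫⁻ ξ, (‖ftM d μ ξ‖₊ : ℝ≥0∞) ^ 2 *
        (∫⁻ g : OG d, (‖ftM d μ (act d g ξ)‖₊ : ℝ≥0∞) ^ 2 ∂dg)
      = (sphM d univ)⁻¹ * mattila d μ := by
  have hmeas : Measurable fun ξ ↦ (‖ftM d μ ξ‖₊ : ℝ≥0∞) ^ 2 :=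
    (continuous_ftM μ).measurable.nnnorm.coe_nnreal_ennreal.pow_const 2
  rw [lintegral_mul_lintegral_act hmeas hmeas, mattila]
  simp only [sphAvg, sq, ← Real.rpow_natCast, Nat.cast_pred (NeZero.pos d)]

end Mattila

theorem stmt10 (d : ℕ) (hd : 2 ≤ d) :
    ∃ c : ℝ≥0∞, 0 < c ∧ c ≠ ⊤ ∧
      ∀ (μ : Measure (Pt d)), IsFiniteMeasure μ →
        ∀ (K : Set (Pt d)), IsCompact K → μ Kᶜ = 0 →
          ∀ (dg : Measure (OG d)), IsProbabilityMeasure dg → dg.IsMulLeftInvariant →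
            ∫⁻ ξ, (‖ftM d μ ξ‖₊ : ℝ≥0∞) ^ 2 *
                (∫⁻ g, (‖ftM d μ (act d (g : Matrix (Fin d) (Fin d) ℝ) ξ)‖₊ : ℝ≥0∞) ^ 2 ∂dg)
                ∂volume
              = c * mattila d μ := by
  have : NeZero d := ⟨by lia⟩
  exact ⟨(sphM d univ)⁻¹, ENNReal.inv_pos.2 (measure_ne_top _ _),
    ENNReal.inv_ne_top.2 sphM_univ_ne_zero, fun μ _ _ _ _ dg _ _ ↦ stmt10_general μ dg⟩
end
end

section
/- Let E ⊂ ℝ^d, d ≥ 2, be a compact set with Hausdorff dimension greater than (d+1)/2. Then the distance set Δ(E) = {|x−y| : x, y ∈ E} has positive one-dimensional Lebesgue measure. -/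
open MeasureTheory Metric Set Topology
open scoped ENNReal

noncomputable section

/-- The distance set `Δ(E) = {|x - y| : x, y ∈ E} ⊆ ℝ`. -/
def distSet (d : ℕ) (E : Set (Pt d)) : Set ℝ :=
  {r : ℝ | ∃ x ∈ E, ∃ y ∈ E, dist x y = r}

/-!
Fix `s` with `(d + 1) / 2 < s < dim E` and a probability measure `μ` on `E` with
`μ(B(x, r)) ≲ r ^ s`, and let `ν` be the distribution of `|x - y|²` for independent `x, y` of law
`μ`. Writing `e(u) = exp(2πiu)`, expanding the square gives
`ν̂(t) = ∫ e(-t|x|²) f̂ₜ(-2tx) dμ(x)`, where `f̂ₜ` is the Fourier transform of `e(-t|y|²) dμ(y)`.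
By Cauchy–Schwarz `|ν̂(t)|² ≤ ∫ |f̂ₜ(-2tx)|² dμ(x)`. As `μ` has compact support, `f̂ₜ` is
essentially constant at unit scale, so here `μ` may be replaced by its average at scale `1 / |t|`,
whose density is `≲ |t| ^ (d - s)`; and the average of `|f̂ₜ|²` over the ball of radius `|t|` is
`≲ |t| ^ (-s)`. Hence `|ν̂(t)|² ≲ |t| ^ (d - 2s)`, and `2s - d > 1` puts `ν̂` in `L²`. So `ν` is
absolutely continuous, and the set of squared distances, which carries it, is not a null set.
-/

namespace Falconer

/-! ### Frostman's lemma -/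

section Frostman

/-- The Frostman condition of exponent `s` with constant `C`: balls of radius `r` have measure at
most `C * r ^ s`. -/
def IsFrostman {X : Type*} [PseudoMetricSpace X] [MeasurableSpace X] (μ : Measure X)
    (C : ℝ≥0∞) (s : ℝ) : Prop :=
  ∀ (x : X) (r : ℝ), 0 < r → μ (closedBall x r) ≤ C * ENNReal.ofReal r ^ s

lemma exists_saturated_measure {X ι : Type*} [MeasurableSpace X] [MeasurableSingletonClass X]
    {I : Finset ι} {B : ι → Set X} (hB : ∀ i ∈ I, MeasurableSet (B i)) (c : ι → ℝ≥0∞)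
    (F : Finset X) (hF : ∀ x ∈ F, ∃ i ∈ I, x ∈ B i) :
    ∃ μ : Measure X, μ (F : Set X)ᶜ = 0 ∧ (∀ i ∈ I, μ (B i) ≤ c i) ∧
      ∀ x ∈ F, ∃ i ∈ I, x ∈ B i ∧ μ (B i) = c i := by
  classical
  induction F using Finset.induction_on with
  | empty => exact ⟨0, by simp, by simp, by simp⟩
  | insert a F _ ih =>
    obtain ⟨μ, hμF, hμc, hμsat⟩ := ih fun x hx => hF x (Finset.mem_insert_of_mem hx)
    obtain ⟨i₀, hi₀, hai₀⟩ := hF a (Finset.mem_insert_self _ _)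
    obtain ⟨k, hk, hkmin⟩ := Finset.exists_min_image (I.filter (a ∈ B ·))
      (fun i => c i - μ (B i)) ⟨i₀, Finset.mem_filter.2 ⟨hi₀, hai₀⟩⟩
    obtain ⟨hkI, hak⟩ := Finset.mem_filter.1 hk
    -- The mass added at `a` is the largest one that respects all the caps.
    set ν := μ + (c k - μ (B k)) • Measure.dirac a
    have hν_le : ∀ i ∈ I, ν (B i) ≤ c i := fun i hi => by
      by_cases hai : a ∈ B i
      · have hslack := hkmin i (Finset.mem_filter.2 ⟨hi, hai⟩)
        calc ν (B i) = μ (B i) + (c k - μ (B k)) := by simp [ν, hB i hi, hai]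
          _ ≤ μ (B i) + (c i - μ (B i)) := by gcongr
          _ = c i := add_tsub_cancel_of_le (hμc i hi)
      · simpa [ν, hB i hi, hai] using hμc i hi
    refine ⟨ν, ?_, hν_le, fun x hx => ?_⟩
    · have hμ : μ (insert a F : Set X)ᶜ = 0 :=
        measure_mono_null (compl_subset_compl.2 (subset_insert _ _)) hμF
      simp [ν, hμ]
    · rcases Finset.mem_insert.1 hx with rfl | hxF
      · exact ⟨k, hkI, hak, by simp [ν, hB k hkI, hak, add_tsub_cancel_of_le (hμc k hkI)]⟩
      · obtain ⟨i, hi, hxi, hsat⟩ := hμsat x hxF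
        exact ⟨i, hi, hxi, (hν_le i hi).antisymm (hsat ▸ Measure.le_add_right le_rfl _)⟩

lemma exists_le_sum_ediam_rpow {X : Type*} [MetricSpace X] [MeasurableSpace X] [BorelSpace X]
    {E : Set X} {s : ℝ} (hs : 0 < s) (hE : Measure.hausdorffMeasure s E ≠ 0) (ι : Type*) :
    ∃ c : ℝ≥0∞, c ≠ 0 ∧ ∀ (I : Finset ι) (t : ι → Set X), E ⊆ ⋃ i ∈ I, t i →
      c ≤ ∑ i ∈ I, ediam (t i) ^ s := by
  by_contra! hsmall
  have hpos : ∀ n : ℕ, (n : ℝ≥0∞)⁻¹ ≠ 0 := by simp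
  choose I t hcover hsum using fun n => hsmall _ (hpos n)
  have hradius : Filter.Tendsto (fun n : ℕ => ((n : ℝ≥0∞)⁻¹) ^ s⁻¹) Filter.atTop (𝓝 0) := by
    simpa [hs] using ENNReal.tendsto_inv_nat_nhds_zero.ennrpow_const s⁻¹
  have hdiam : ∀ (n : ℕ) (i : I n), ediam (t n i) ≤ ((n : ℝ≥0∞)⁻¹) ^ s⁻¹ := fun n i => by
    rw [ENNReal.le_rpow_inv_iff hs]
    exact (Finset.single_le_sum (f := fun i => ediam (t n i) ^ s) (fun _ _ => zero_le)
      i.2).trans (hsum n).le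
  have hle := Measure.hausdorffMeasure_le_liminf_sum s E _ hradius (fun n (i : I n) => t n i)
    (.of_forall hdiam) (.of_forall fun n => by simpa [iUnion_subtype] using hcover n)
  refine hE (le_antisymm (hle.trans ?_) zero_le)
  rw [← ENNReal.tendsto_inv_nat_nhds_zero.liminf_eq]
  refine Filter.liminf_le_liminf (.of_forall fun n => ?_)
  rw [Finset.sum_coe_sort (I n) fun i => ediam (t n i) ^ s]
  exact (hsum n).le

variable {X : Type*} [MetricSpace X]

lemma ediam_closedBall_rpow_le (x : X) (r : ℝ) {s : ℝ} (hs : 0 ≤ s) :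
    ediam (closedBall x r) ^ s ≤ 2 ^ s * ENNReal.ofReal r ^ s := by
  rw [← ENNReal.mul_rpow_of_nonneg _ _ hs]
  gcongr
  refine (ediam_mono (t := closedEBall x (ENNReal.ofReal r)) fun y hy => ?_).trans
    ediam_closedEBall_le
  simpa [edist_dist] using ENNReal.ofReal_le_ofReal hy

variable [MeasurableSpace X]

lemma measure_closedBall_le_of_finset {s : ℝ} (hs : 0 ≤ s) {μ : Measure X} {F : Finset X}
    (hF : μ (F : Set X)ᶜ = 0) {δ : ℝ}
    (hμ : ∀ x ∈ F, ∀ y ∈ F, μ (closedBall x (max (dist x y) δ)) ≤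
      ENNReal.ofReal (max (dist x y) δ) ^ s)
    (z : X) {r : ℝ} (hr : δ ≤ r) (hr₀ : 0 ≤ r) :
    μ (closedBall z r) ≤ 2 ^ s * ENNReal.ofReal r ^ s := by
  classical
  have hrestrict : μ (closedBall z r) = μ (F ∩ closedBall z r) :=
    (measure_inter_conull' (measure_mono_null (fun _ h => h.2) hF)).symm ▸ by rw [inter_comm]
  rw [hrestrict, ← ENNReal.mul_rpow_of_nonneg _ _ hs, ← ENNReal.ofReal_ofNat,
    ← ENNReal.ofReal_mul (by norm_num)]
  obtain hempty | ⟨x, hx⟩ := (F.filter (· ∈ closedBall z r)).eq_empty_or_nonempty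
  · have : (F : Set X) ∩ closedBall z r = ∅ := by
      rw [← disjoint_iff_inter_eq_empty, disjoint_left]
      exact fun w hw => Finset.filter_eq_empty_iff.1 hempty hw
    simp [this]
  obtain ⟨y, hy, hmax⟩ := (F.filter (· ∈ closedBall z r)).exists_max_image (dist x) ⟨x, hx⟩
  rw [Finset.mem_filter, mem_closedBall] at hx hy
  calc μ (F ∩ closedBall z r) ≤ μ (closedBall x (max (dist x y) δ)) :=
        measure_mono fun w hw => by
          rw [mem_closedBall, dist_comm]
          exact (hmax w (Finset.mem_filter.2 hw)).trans (le_max_left _ _)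
    _ ≤ ENNReal.ofReal (max (dist x y) δ) ^ s := hμ x hx.1 y hy.1
    _ ≤ ENNReal.ofReal (2 * r) ^ s := by
        gcongr
        refine max_le ?_ (by linarith)
        linarith [dist_triangle_right x y z, hx.2, hy.2]

variable [BorelSpace X]

lemma exists_sum_ediam_rpow_le_measure {ι : Type*} {s : ℝ} (hs : 0 ≤ s) {μ : Measure X}
    {I : Finset ι} {x : ι → X} {r : ι → ℝ} {δ : ℝ} (hδ : ∀ i ∈ I, δ ≤ r i)
    (hμ : ∀ i ∈ I, ENNReal.ofReal (r i) ^ s ≤ μ (closedBall (x i) (r i)))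
    {E : Set X} (hE : ∀ y ∈ E, ∃ i ∈ I, ∃ z ∈ closedBall (x i) (r i), dist y z ≤ δ) :
    ∃ (J : Finset ι) (t : ι → Set X), E ⊆ ⋃ i ∈ J, t i ∧
      ∑ i ∈ J, ediam (t i) ^ s ≤ 12 ^ s * μ univ := by
  obtain ⟨R, hR⟩ := (I.image r).bddAbove
  obtain ⟨J, hJI, hdisj, hJ⟩ := Vitali.exists_disjoint_subfamily_covering_enlargement_closedBall
    (I : Set ι) x r R (fun i hi => hR (Finset.mem_coe.2 (Finset.mem_image_of_mem r hi))) 5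
    (by norm_num)
  lift J to Finset ι using I.finite_toSet.subset hJI
  refine ⟨J, fun i => closedBall (x i) (6 * r i), fun y hy => ?_, ?_⟩
  · obtain ⟨i, hi, z, hz, hyz⟩ := hE y hy
    obtain ⟨j, hj, hsub⟩ := hJ i hi
    refine mem_iUnion₂.2 ⟨j, hj, ?_⟩
    have hzj : dist z (x j) ≤ 5 * r j := hsub hz
    have hδj := hδ j (hJI hj)
    have := dist_triangle y z (x j)
    rw [mem_closedBall]
    linarith
  · have hball : ∀ i, ediam (closedBall (x i) (6 * r i)) ^ s ≤ 12 ^ s * ENNReal.ofReal (r i) ^ s :=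
      fun i => (ediam_closedBall_rpow_le _ _ hs).trans_eq <| by
        rw [ENNReal.ofReal_mul (by norm_num), ENNReal.mul_rpow_of_nonneg _ _ hs, ← mul_assoc,
          ← ENNReal.mul_rpow_of_nonneg _ _ hs]
        norm_num
    calc ∑ i ∈ J, ediam (closedBall (x i) (6 * r i)) ^ s
        ≤ ∑ i ∈ J, 12 ^ s * μ (closedBall (x i) (r i)) := by
          gcongr with i hi
          exact (hball i).trans (by gcongr; exact hμ i (hJI hi))
      _ = 12 ^ s * μ (⋃ i ∈ J, closedBall (x i) (r i)) := by
          rw [← Finset.mul_sum, measure_biUnion_finset hdisj fun _ _ => measurableSet_closedBall]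
      _ ≤ 12 ^ s * μ univ := by gcongr; exact subset_univ _

lemma exists_isProbabilityMeasure_measure_closedBall_le [CompactSpace X] {s : ℝ} (hs : 0 < s)
    (hX : Measure.hausdorffMeasure s (univ : Set X) ≠ 0) :
    ∃ C : ℝ≥0∞, C ≠ ∞ ∧ ∀ δ : ℝ, 0 < δ → ∃ μ : Measure X, IsProbabilityMeasure μ ∧
      ∀ (x : X) (r : ℝ), δ ≤ r → μ (closedBall x r) ≤ C * ENNReal.ofReal r ^ s := by
  obtain ⟨c, hc, hcontent⟩ := exists_le_sum_ediam_rpow hs hX (X × X)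
  refine ⟨(12 ^ s / c) * 2 ^ s, by finiteness, fun δ hδ => ?_⟩
  obtain ⟨F, -, hFfin, hFcover⟩ := isCompact_univ.finite_cover_balls (X := X) hδ
  lift F to Finset X using hFfin
  let r : X × X → ℝ := fun p => max (dist p.1 p.2) δ
  obtain ⟨ν, hνF, hνle, hνsat⟩ := exists_saturated_measure (I := F ×ˢ F)
    (B := fun p => closedBall p.1 (r p)) (fun _ _ => measurableSet_closedBall)
    (fun p => ENNReal.ofReal (r p) ^ s) F fun x hx => ⟨(x, x), by simp [hx, r, hδ.le]⟩
  have hball : ∀ (x : X) (ρ : ℝ), δ ≤ ρ → ν (closedBall x ρ) ≤ 2 ^ s * ENNReal.ofReal ρ ^ s :=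
    fun x ρ hρ => measure_closedBall_le_of_finset hs.le hνF
      (fun x hx y hy => hνle (x, y) (Finset.mk_mem_product hx hy)) x hρ (hδ.le.trans hρ)
  have hmass : c ≤ 12 ^ s * ν univ := by
    classical
    obtain ⟨J, t, hcover, hsum⟩ := exists_sum_ediam_rpow_le_measure hs.le
      (I := (F ×ˢ F).filter fun p => ν (closedBall p.1 (r p)) = ENNReal.ofReal (r p) ^ s)
      (fun p _ => le_max_right _ δ) (fun p hp => (Finset.mem_filter.1 hp).2.ge)
      (E := univ) fun y hy => by
        obtain ⟨z, hz, hyz⟩ := mem_iUnion₂.1 (hFcover hy)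
        obtain ⟨p, hp, hzp, hsat⟩ := hνsat z hz
        exact ⟨p, Finset.mem_filter.2 ⟨hp, hsat⟩, z, hzp, (mem_ball.1 hyz).le⟩
    exact (hcontent J t hcover).trans hsum
  have hν₀ : NeZero ν := ⟨by rintro rfl; simp [hc] at hmass⟩
  have hνloc : IsLocallyFiniteMeasure ν := ⟨fun x => ⟨closedBall x δ, closedBall_mem_nhds x hδ,
    (hball x δ le_rfl).trans_lt (by finiteness)⟩⟩
  refine ⟨(ν univ)⁻¹ • ν, inferInstance, fun x ρ hρ => ?_⟩
  have hinv : (ν univ)⁻¹ ≤ 12 ^ s / c := by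
    rw [← ENNReal.inv_div (.inl (by finiteness)) (.inl (by simp)), ENNReal.inv_le_inv]
    exact ENNReal.div_le_of_le_mul' hmass
  calc (ν univ)⁻¹ * ν (closedBall x ρ)
      ≤ 12 ^ s / c * (2 ^ s * ENNReal.ofReal ρ ^ s) := by gcongr; exact hball x ρ hρ
    _ = 12 ^ s / c * 2 ^ s * ENNReal.ofReal ρ ^ s := (mul_assoc _ _ _).symm

lemma exists_isFrostman_of_compactSpace [CompactSpace X] {s : ℝ} (hs : 0 < s)
    (hX : Measure.hausdorffMeasure s (univ : Set X) ≠ 0) :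
    ∃ (μ : Measure X) (C : ℝ≥0∞), IsProbabilityMeasure μ ∧ C ≠ ∞ ∧ IsFrostman μ C s := by
  obtain ⟨C, hC, hscale⟩ := exists_isProbabilityMeasure_measure_closedBall_le hs hX
  choose μ hμ hμC using fun n : ℕ => hscale (1 / (n + 1)) Nat.one_div_pos_of_nat
  let P : ℕ → ProbabilityMeasure X := fun n => ⟨μ n, hμ n⟩
  let U : Ultrafilter ℕ := .of Filter.atTop
  obtain ⟨ν, -, hν⟩ := isCompact_univ.ultrafilter_le_nhds (U.map P) (by simp)
  refine ⟨ν, C * 2 ^ s, inferInstance, by finiteness, fun x r hr => ?_⟩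
  have hsmall : ∀ᶠ n : ℕ in U, 1 / ((n : ℝ) + 1) ≤ 2 * r :=
    (Ultrafilter.of_le _) (tendsto_one_div_add_atTop_nhds_zero_nat.eventually_le_const
      (by positivity))
  calc (ν : Measure X) (closedBall x r) ≤ (ν : Measure X) (ball x (2 * r)) :=
        measure_mono (closedBall_subset_ball (by linarith))
    _ ≤ Filter.liminf (fun n => μ n (ball x (2 * r))) U :=
        ProbabilityMeasure.le_liminf_measure_open_of_tendsto hν isOpen_ball
    _ ≤ C * ENNReal.ofReal (2 * r) ^ s :=
        Filter.liminf_le_of_frequently_le' (hsmall.mono fun n hn =>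
          (measure_mono ball_subset_closedBall).trans (hμC n x _ hn)).frequently
    _ = C * 2 ^ s * ENNReal.ofReal r ^ s := by
        rw [ENNReal.ofReal_mul zero_le_two, ENNReal.mul_rpow_of_nonneg _ _ hs.le, mul_assoc,
          ENNReal.ofReal_ofNat]

theorem exists_isFrostman {E : Set X} (hE : IsCompact E) {s : ℝ} (hs : 0 < s)
    (hEs : Measure.hausdorffMeasure s E ≠ 0) :
    ∃ (μ : Measure X) (C : ℝ≥0∞), IsProbabilityMeasure μ ∧ μ Eᶜ = 0 ∧ C ≠ ∞ ∧
      IsFrostman μ C s := by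
  have : CompactSpace E := isCompact_iff_compactSpace.1 hE
  obtain ⟨ν, C, _, hC, hν⟩ := exists_isFrostman_of_compactSpace (X := E) hs <| by
    rwa [← isometry_subtype_coe.hausdorffMeasure_image (.inl hs.le), image_univ,
      Subtype.range_coe]
  have hcoe : Measurable ((↑) : E → X) := measurable_subtype_coe
  refine ⟨ν.map (↑), C * 2 ^ s, Measure.isProbabilityMeasure_map hcoe.aemeasurable, ?_,
    by finiteness, fun x r hr => ?_⟩
  · simp [Measure.map_apply hcoe hE.measurableSet.compl]
  rw [Measure.map_apply hcoe measurableSet_closedBall]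
  obtain hempty | ⟨y, hy⟩ := (((↑) : E → X) ⁻¹' closedBall x r).eq_empty_or_nonempty
  · simp [hempty]
  calc ν ((↑) ⁻¹' closedBall x r) ≤ ν (closedBall y (2 * r)) := measure_mono fun z hz => by
        have hxy : dist (y : X) x ≤ r := hy
        have hxz : dist (z : X) x ≤ r := hz
        rw [mem_closedBall, Subtype.dist_eq]
        linarith [dist_triangle_right (z : X) y x]
    _ ≤ C * ENNReal.ofReal (2 * r) ^ s := hν y _ (by positivity)
    _ = C * 2 ^ s * ENNReal.ofReal r ^ s := by
        rw [ENNReal.ofReal_mul zero_le_two, ENNReal.mul_rpow_of_nonneg _ _ hs.le, mul_assoc,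
          ENNReal.ofReal_ofNat]

lemma summable_exp_neg_mul_add_one_rpow (s : ℝ) :
    Summable fun m : ℕ => Real.exp (-m) * (m + 1 : ℝ) ^ s := by
  have hpow : Summable fun m : ℕ => Real.exp 1 *
      (((m + 1 : ℕ) : ℝ) ^ ⌈s⌉₊ * Real.exp (-1 * (m + 1 : ℕ))) :=
    ((summable_nat_add_iff 1).2 (Real.summable_pow_mul_exp_neg_nat_mul ⌈s⌉₊ one_pos)).mul_left _
  refine hpow.of_nonneg_of_le (fun m => by positivity) fun m => ?_
  have hexp : Real.exp (-m) = Real.exp 1 * Real.exp (-1 * (m + 1 : ℕ)) := by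
    rw [← Real.exp_add]
    push_cast
    ring_nf
  have hrpow : (m + 1 : ℝ) ^ s ≤ ((m + 1 : ℕ) : ℝ) ^ ⌈s⌉₊ := by
    rw [Nat.cast_succ, ← Real.rpow_natCast]
    exact Real.rpow_le_rpow_of_exponent_le (by simp) (Nat.le_ceil s)
  rw [hexp, mul_assoc, mul_comm (Real.exp (-1 * _))]
  gcongr

lemma exp_neg_pi_mul_sq_le_exp_neg_floor {u : ℝ} (hu : 0 ≤ u) :
    Real.exp (-Real.pi * u ^ 2) ≤ Real.exp (-(⌊u⌋₊ : ℝ)) := by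
  have hfloor : (⌊u⌋₊ : ℝ) ≤ (⌊u⌋₊ : ℝ) ^ 2 := by exact_mod_cast Nat.le_self_pow two_ne_zero _
  have hsq : (⌊u⌋₊ : ℝ) ^ 2 ≤ u ^ 2 := by gcongr; exact Nat.floor_le hu
  gcongr
  nlinarith [Real.pi_gt_three, sq_nonneg u]

lemma IsFrostman.exists_lintegral_exp_neg_sq_le {X : Type*} [PseudoMetricSpace X]
    [MeasurableSpace X] [OpensMeasurableSpace X] {μ : Measure X} {C : ℝ≥0∞} {s : ℝ}
    (hμ : IsFrostman μ C s) (hC : C ≠ ∞) (hs : 0 ≤ s) :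
    ∃ K : ℝ≥0∞, K ≠ ∞ ∧ ∀ (x : X) (r : ℝ), 0 < r →
      ∫⁻ y, ENNReal.ofReal (Real.exp (-Real.pi * (dist y x / r) ^ 2)) ∂μ ≤
        K * ENNReal.ofReal r ^ s := by
  refine ⟨∑' m : ℕ, ENNReal.ofReal (Real.exp (-m) * (m + 1 : ℝ) ^ s) * C, ?_, fun x r hr => ?_⟩
  · rw [ENNReal.tsum_mul_right]
    exact ENNReal.mul_ne_top (summable_exp_neg_mul_add_one_rpow s).tsum_ofReal_ne_top hC
  let B : ℕ → Set X := fun m => closedBall x ((m + 1) * r)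
  have hshells : ∀ y, ENNReal.ofReal (Real.exp (-Real.pi * (dist y x / r) ^ 2)) ≤
      ∑' m : ℕ, ENNReal.ofReal (Real.exp (-m)) * (B m).indicator 1 y := fun y => by
    have hy : y ∈ B ⌊dist y x / r⌋₊ :=
      mem_closedBall.2 ((div_le_iff₀ hr).1 (Nat.lt_floor_add_one _).le)
    refine le_trans ?_ (ENNReal.le_tsum ⌊dist y x / r⌋₊)
    simpa [hy] using ENNReal.ofReal_le_ofReal (exp_neg_pi_mul_sq_le_exp_neg_floor (by positivity))
  calc ∫⁻ y, ENNReal.ofReal (Real.exp (-Real.pi * (dist y x / r) ^ 2)) ∂μ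
      ≤ ∫⁻ y, ∑' m : ℕ, ENNReal.ofReal (Real.exp (-m)) * (B m).indicator 1 y ∂μ :=
        lintegral_mono hshells
    _ = ∑' m : ℕ, ENNReal.ofReal (Real.exp (-m)) * μ (B m) := by
        rw [lintegral_tsum fun m => by
          exact ((measurable_one.indicator measurableSet_closedBall).const_mul _).aemeasurable]
        congr! 2 with m
        rw [lintegral_const_mul _ (measurable_one.indicator measurableSet_closedBall),
          lintegral_indicator_one measurableSet_closedBall]
    _ ≤ ∑' m : ℕ, ENNReal.ofReal (Real.exp (-m) * (m + 1 : ℝ) ^ s) * C * ENNReal.ofReal r ^ s := by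
        refine ENNReal.tsum_le_tsum fun m => ?_
        have hball : μ (B m) ≤ C * ENNReal.ofReal ((m + 1) * r) ^ s := hμ x _ (by positivity)
        rw [ENNReal.ofReal_mul (by positivity), ENNReal.mul_rpow_of_nonneg _ _ hs,
          ENNReal.ofReal_rpow_of_pos (by positivity)] at hball
        rw [ENNReal.ofReal_mul (Real.exp_pos _).le]
        calc _ ≤ ENNReal.ofReal (Real.exp (-m)) *
              (C * (ENNReal.ofReal ((m + 1) ^ s) * ENNReal.ofReal r ^ s)) := by gcongr
          _ = _ := by ring
    _ = _ := ENNReal.tsum_mul_right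

end Frostman

open scoped Real FourierTransform RealInnerProductSpace SchwartzMap

/-! ### Fourier transforms of measures -/

section Fourier

variable {V : Type*} [NormedAddCommGroup V] [InnerProductSpace ℝ V] [MeasurableSpace V]

/-- The Fourier transform of the complex measure `f • μ`. -/
def fourierMeasure (μ : Measure V) (f : V → ℂ) (ξ : V) : ℂ :=
  ∫ y, 𝐞 (-⟪y, ξ⟫) • f y ∂μ

variable {μ : Measure V} {f : V → ℂ}

lemma norm_fourierMeasure_le_integral_norm (ξ : V) : ‖fourierMeasure μ f ξ‖ ≤ ∫ y, ‖f y‖ ∂μ :=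
  VectorFourier.norm_fourierIntegral_le_integral_norm 𝐞 μ (innerₗ V) f ξ

lemma norm_fourierMeasure_sq_eq_integral [SFinite μ] (t : ℝ) (z : V) :
    ((‖fourierMeasure μ f (t • z)‖ ^ 2 : ℝ) : ℂ) =
      ∫ p, 𝐞 (-⟪t • (p.1 - p.2), z⟫) • (f p.1 * starRingEnd ℂ (f p.2)) ∂μ.prod μ := by
  have hpoint : ∀ p : V × V, 𝐞 (-⟪t • (p.1 - p.2), z⟫) • (f p.1 * starRingEnd ℂ (f p.2)) =
      (𝐞 (-⟪p.1, t • z⟫) • f p.1) * starRingEnd ℂ (𝐞 (-⟪p.2, t • z⟫) • f p.2) := fun p => by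
    have hinner : -⟪t • (p.1 - p.2), z⟫ = -⟪p.1, t • z⟫ + ⟪p.2, t • z⟫ := by
      simp only [inner_smul_left, inner_smul_right, inner_sub_left, RCLike.conj_to_real]
      ring
    simp only [hinner, AddChar.map_add_eq_mul, AddChar.map_neg_eq_inv, Circle.smul_def, smul_eq_mul,
      map_mul, Circle.coe_mul, Circle.coe_inv_eq_conj, Complex.conj_conj]
    ring
  simp_rw [hpoint]
  rw [integral_prod_mul (fun y => 𝐞 (-⟪y, t • z⟫) • f y)
    (fun y => starRingEnd ℂ (𝐞 (-⟪y, t • z⟫) • f y)), integral_conj, Complex.mul_conj,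
    Complex.normSq_eq_norm_sq]
  rfl

variable [BorelSpace V]

lemma integrable_fourierChar_smul (hf : Integrable f μ) (ξ : V) :
    Integrable (fun y => 𝐞 (-⟪y, ξ⟫) • f y) μ :=
  (VectorFourier.fourierIntegral_convergent_iff (L := innerₗ V) Real.continuous_fourierChar
    continuous_inner ξ).2 hf

lemma continuous_fourierMeasure (hf : Integrable f μ) : Continuous (fourierMeasure μ f) :=
  VectorFourier.fourierIntegral_continuous (L := innerₗ V) Real.continuous_fourierChar
    continuous_inner hf

end Fourier

section SquareIntegrable

lemma lintegral_mul_sq_le {P : Type*} [MeasurableSpace P] {γ : Measure P} {f g : P → ℝ≥0∞}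
    (hf : AEMeasurable f γ) (hg : AEMeasurable g γ) :
    (∫⁻ x, f x * g x ∂γ) ^ 2 ≤ (∫⁻ x, f x ^ 2 ∂γ) * ∫⁻ x, g x ^ 2 ∂γ := by
  have hroot : ∀ a : ℝ≥0∞, (a ^ (1 / 2 : ℝ)) ^ 2 = a := fun a => by
    rw [← ENNReal.rpow_mul_natCast]
    norm_num
  have holder := ENNReal.lintegral_mul_le_Lp_mul_Lq γ Real.HolderConjugate.two_two hf hg
  simp only [Pi.mul_apply, ENNReal.rpow_two] at holder
  calc (∫⁻ x, f x * g x ∂γ) ^ 2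
      ≤ ((∫⁻ x, f x ^ 2 ∂γ) ^ (1 / 2 : ℝ) * (∫⁻ x, g x ^ 2 ∂γ) ^ (1 / 2 : ℝ)) ^ 2 := by gcongr
    _ = (∫⁻ x, f x ^ 2 ∂γ) * ∫⁻ x, g x ^ 2 ∂γ := by rw [mul_pow, hroot, hroot]

lemma enorm_integral_sq_le_lintegral {P : Type*} [MeasurableSpace P] {γ : Measure P}
    [IsProbabilityMeasure γ] {g : P → ℂ} (hg : AEStronglyMeasurable g γ) :
    ‖∫ z, g z ∂γ‖ₑ ^ 2 ≤ ∫⁻ z, ‖g z‖ₑ ^ 2 ∂γ :=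
  calc ‖∫ z, g z ∂γ‖ₑ ^ 2 ≤ (∫⁻ z, ‖g z‖ₑ ∂γ) ^ 2 := by
        gcongr
        exact enorm_integral_le_lintegral_enorm _
    _ ≤ ∫⁻ z, ‖g z‖ₑ ^ 2 ∂γ := by
        simpa using lintegral_mul_sq_le hg.enorm (aemeasurable_const (b := 1))

lemma exists_schwartzMap_indicator_le {W : Type*} [NormedAddCommGroup W] [NormedSpace ℝ W]
    [FiniteDimensional ℝ W] {K U : Set W} (hK : IsCompact K) (hU : IsOpen U) (hKU : K ⊆ U) :
    ∃ (φ : 𝓢(W, ℂ)) (g : W → ℝ), (∀ x, φ x = g x) ∧ K.indicator 1 ≤ g ∧ g ≤ U.indicator 1 := by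
  obtain ⟨B, hB, hKB, hBcpt⟩ := exists_isOpen_superset_and_isCompact_closure hK
  obtain ⟨g, hg, hrange, hsupp, hone⟩ := exists_contMDiff_support_eq_eq_one_iff (n := ⊤)
    (modelWithCornersSelf ℝ W) (hU.inter hB) hK.isClosed (subset_inter hKU hKB)
  have hIcc : ∀ x, g x ∈ Icc 0 1 := fun x => hrange (mem_range_self x)
  have hgcpt : HasCompactSupport g :=
    hBcpt.of_isClosed_subset isClosed_closure (closure_mono (hsupp.trans_subset inter_subset_right))
  refine ⟨(hgcpt.comp_left Complex.ofReal_zero).toSchwartzMap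
    (Complex.ofRealCLM.contDiff.comp hg.contDiff), g, fun x => rfl,
    indicator_le' (fun x hx => ((hone x).1 hx).ge) fun x _ => (hIcc x).1,
    le_indicator (fun x _ => (hIcc x).2) fun x hx => ?_⟩
  exact (Function.notMem_support.1 fun h => hx (hsupp ▸ h).1).le

variable {V : Type*} [NormedAddCommGroup V] [InnerProductSpace ℝ V] [FiniteDimensional ℝ V]
  [MeasurableSpace V] [BorelSpace V]

lemma lintegral_enorm_fourier_sq (φ : 𝓢(V, ℂ)) :
    ∫⁻ ξ, ‖𝓕 φ ξ‖ₑ ^ 2 = ∫⁻ x, ‖φ x‖ₑ ^ 2 := by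
  have hsq : ∀ ψ : 𝓢(V, ℂ), ∫⁻ x, ‖ψ x‖ₑ ^ 2 = ENNReal.ofReal (∫ x, ‖ψ x‖ ^ 2) := fun ψ => by
    rw [ofReal_integral_eq_lintegral_ofReal (μ := volume)
      ((memLp_two_iff_integrable_sq_norm ψ.continuous.aestronglyMeasurable).1 (ψ.memLp 2))
      (.of_forall fun _ => sq_nonneg _)]
    simp [ENNReal.ofReal_pow]
  rw [hsq, hsq, SchwartzMap.integral_norm_sq_fourier]

variable {ν : Measure V} [IsFiniteMeasure ν]

lemma integral_fourier_eq_integral_fourierMeasure_mul (φ : 𝓢(V, ℂ)) :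
    ∫ x, 𝓕 φ x ∂ν = ∫ ξ, fourierMeasure ν 1 ξ * φ ξ := by
  have hflip := VectorFourier.integral_fourierIntegral_smul_eq_flip (L := innerₗ V) (f := 1)
    Real.continuous_fourierChar continuous_inner (integrable_const (μ := ν) (1 : ℂ))
    (φ.integrable (μ := volume))
  simp only [flip_innerₗ, Pi.one_apply, one_smul] at hflip
  exact hflip.symm

lemma enorm_integral_schwartzMap_sq_le (φ : 𝓢(V, ℂ)) :
    ‖∫ x, φ x ∂ν‖ₑ ^ 2 ≤ (∫⁻ ξ, ‖fourierMeasure ν 1 ξ‖ₑ ^ 2) * ∫⁻ x, ‖φ x‖ₑ ^ 2 := by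
  have hcont : Continuous (fourierMeasure ν 1) := continuous_fourierMeasure (integrable_const 1)
  calc ‖∫ x, φ x ∂ν‖ₑ ^ 2
      = ‖∫ ξ, fourierMeasure ν 1 ξ * 𝓕⁻ φ ξ‖ₑ ^ 2 := by
        rw [← integral_fourier_eq_integral_fourierMeasure_mul,
          FourierTransform.fourier_fourierInv_eq]
    _ ≤ (∫⁻ ξ, ‖fourierMeasure ν 1 ξ‖ₑ * ‖𝓕⁻ φ ξ‖ₑ) ^ 2 := by
        simp_rw [← enorm_mul]
        gcongr
        exact enorm_integral_le_lintegral_enorm _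
    _ ≤ (∫⁻ ξ, ‖fourierMeasure ν 1 ξ‖ₑ ^ 2) * ∫⁻ ξ, ‖𝓕⁻ φ ξ‖ₑ ^ 2 :=
        lintegral_mul_sq_le (by fun_prop) (by fun_prop)
    _ = (∫⁻ ξ, ‖fourierMeasure ν 1 ξ‖ₑ ^ 2) * ∫⁻ x, ‖φ x‖ₑ ^ 2 := by
        rw [← lintegral_enorm_fourier_sq (𝓕⁻ φ), FourierTransform.fourier_fourierInv_eq]

lemma measure_sq_le_mul_volume_of_isOpen {K U : Set V} (hK : IsCompact K) (hU : IsOpen U)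
    (hKU : K ⊆ U) : ν K ^ 2 ≤ (∫⁻ ξ, ‖fourierMeasure ν 1 ξ‖ₑ ^ 2) * volume U := by
  obtain ⟨φ, g, hφ, hKg, hgU⟩ := exists_schwartzMap_indicator_le hK hU hKU
  have hg₀ : ∀ x, 0 ≤ g x := fun x => (indicator_nonneg (fun _ _ => zero_le_one) x).trans (hKg x)
  have hg : Integrable g ν := by simpa [hφ] using (φ.integrable (μ := ν)).re
  have hK_le : ν K ≤ ‖∫ x, φ x ∂ν‖ₑ := by
    calc ν K = ∫⁻ x, K.indicator 1 x ∂ν := (lintegral_indicator_one hK.measurableSet).symm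
      _ ≤ ∫⁻ x, ENNReal.ofReal (g x) ∂ν := lintegral_mono fun x => by
          by_cases hx : x ∈ K
          · simpa [hx] using hKg x
          · simp [hx]
      _ = ENNReal.ofReal (∫ x, g x ∂ν) :=
          (ofReal_integral_eq_lintegral_ofReal hg (.of_forall hg₀)).symm
      _ = ‖∫ x, φ x ∂ν‖ₑ := by
          simp_rw [hφ]
          rw [integral_complex_ofReal, ← ofReal_norm, Complex.norm_real,
            Real.norm_of_nonneg (integral_nonneg hg₀)]
  have hU_le : ∫⁻ x, ‖φ x‖ₑ ^ 2 ≤ volume U := by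
    rw [← lintegral_indicator_one hU.measurableSet]
    refine lintegral_mono fun x => ?_
    have hgx := hgU x
    rw [hφ, ← ofReal_norm, Complex.norm_real, Real.norm_of_nonneg (hg₀ x)]
    by_cases hx : x ∈ U
    · simp only [hx, indicator_of_mem, Pi.one_apply] at hgx ⊢
      exact pow_le_one' (ENNReal.ofReal_le_one.2 hgx) 2
    · simp only [hx, not_false_eq_true, indicator_of_notMem] at hgx ⊢
      simp [ENNReal.ofReal_of_nonpos hgx]
  calc ν K ^ 2 ≤ ‖∫ x, φ x ∂ν‖ₑ ^ 2 := by gcongr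
    _ ≤ (∫⁻ ξ, ‖fourierMeasure ν 1 ξ‖ₑ ^ 2) * ∫⁻ x, ‖φ x‖ₑ ^ 2 :=
      enorm_integral_schwartzMap_sq_le φ
    _ ≤ (∫⁻ ξ, ‖fourierMeasure ν 1 ξ‖ₑ ^ 2) * volume U := by gcongr

theorem absolutelyContinuous_of_lintegral_enorm_fourierMeasure_sq_lt_top
    (hν : ∫⁻ ξ, ‖fourierMeasure ν 1 ξ‖ₑ ^ 2 < ∞) : ν ≪ volume := by
  refine .mk fun A hA hA₀ => ?_
  rw [hA.measure_eq_iSup_isCompact]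
  simp only [ENNReal.iSup_eq_zero]
  intro K hKA hK
  by_contra hK₀
  obtain ⟨U, hKU, hU, hvol⟩ : ∃ U ⊇ K, IsOpen U ∧
      volume U < ν K ^ 2 / ∫⁻ ξ, ‖fourierMeasure ν 1 ξ‖ₑ ^ 2 := by
    refine K.exists_isOpen_lt_of_lt _ ?_
    rw [measure_mono_null hKA hA₀]
    exact ENNReal.div_pos (pow_ne_zero 2 hK₀) hν.ne
  exact (ENNReal.mul_lt_of_lt_div' hvol).not_ge (measure_sq_le_mul_volume_of_isOpen hK hU hKU)

end SquareIntegrable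

/-! ### Gaussian averages -/

section Gaussian

/-- The Gaussian probability measure on `V`, with density `exp (-π ‖x‖ ^ 2)`: the normalization for
which it is its own Fourier transform. -/
def gaussian (V : Type*) [NormedAddCommGroup V] [InnerProductSpace ℝ V] [FiniteDimensional ℝ V]
    [MeasurableSpace V] [BorelSpace V] : Measure V :=
  volume.withDensity fun x => ENNReal.ofReal (Real.exp (-π * ‖x‖ ^ 2))

variable {V : Type*} [NormedAddCommGroup V] [InnerProductSpace ℝ V] [FiniteDimensional ℝ V]
  [MeasurableSpace V] [BorelSpace V]

lemma lintegral_gaussian (F : V → ℝ≥0∞) :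
    ∫⁻ x, F x ∂gaussian V = ∫⁻ x, ENNReal.ofReal (Real.exp (-π * ‖x‖ ^ 2)) * F x :=
  lintegral_withDensity_eq_lintegral_mul_non_measurable _ (by fun_prop) (by simp) F

lemma integral_fourierChar_gaussian (v : V) :
    ∫ z, (𝐞 (-⟪v, z⟫) : ℂ) ∂gaussian V = Real.exp (-π * ‖v‖ ^ 2) := by
  have hfourier := fourier_gaussian_innerProductSpace (V := V) (b := π)
    (by simpa using Real.pi_pos) v
  have hπ : (π : ℂ) ≠ 0 := by exact_mod_cast Real.pi_ne_zero
  have hexp : -π ^ 2 * ‖v‖ ^ 2 / (π : ℂ) = -π * ‖v‖ ^ 2 := by field_simp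
  calc ∫ z, (𝐞 (-⟪v, z⟫) : ℂ) ∂gaussian V
      = ∫ z, Real.exp (-π * ‖z‖ ^ 2) • (𝐞 (-⟪v, z⟫) : ℂ) := by
        rw [gaussian, integral_withDensity_eq_integral_toReal_smul (by fun_prop) (by simp)]
        simp [Real.exp_nonneg]
    _ = Real.exp (-π * ‖v‖ ^ 2) := by
        rw [Real.fourier_eq, div_self hπ, Complex.one_cpow, one_mul, hexp] at hfourier
        push_cast
        rw [← hfourier]
        simp [real_inner_comm, Circle.smul_def, mul_comm]

instance : IsProbabilityMeasure (gaussian V) := ⟨by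
  have hone : ∫ x : V, Real.exp (-π * ‖x‖ ^ 2) = 1 := by
    rw [GaussianFourier.integral_rexp_neg_mul_sq_norm Real.pi_pos, div_self Real.pi_ne_zero,
      Real.one_rpow]
  rw [gaussian, withDensity_apply _ .univ, setLIntegral_univ,
    ← ofReal_integral_eq_lintegral_ofReal (integrable_of_integral_eq_one hone)
      (.of_forall fun _ => (Real.exp_pos _).le), hone, ENNReal.ofReal_one]⟩

variable {P : Type*} [MeasurableSpace P] {κ : Measure P} [SFinite κ] {φ : P → V} {F : P → ℂ}

lemma integral_gaussian_integral_fourierChar (hφ : Measurable φ) (hF : Integrable F κ) :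
    ∫ z, ∫ p, 𝐞 (-⟪φ p, z⟫) • F p ∂κ ∂gaussian V = ∫ p, Real.exp (-π * ‖φ p‖ ^ 2) • F p ∂κ := by
  have hchar : Measurable fun q : V × P => (𝐞 (-⟪φ q.2, q.1⟫) : ℂ) := by
    fun_prop
  have hint : Integrable (fun q : V × P => 𝐞 (-⟪φ q.2, q.1⟫) • F q.2) ((gaussian V).prod κ) := by
    have hsnd : Integrable (fun q : V × P => F q.2) ((gaussian V).prod κ) := hF.comp_snd _
    refine hsnd.mono (hchar.aestronglyMeasurable.mul hsnd.1) (.of_forall fun q => ?_)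
    simp
  rw [integral_integral_swap hint]
  refine integral_congr_ae (.of_forall fun p => ?_)
  simp only [Circle.smul_def, integral_smul_const]
  rw [integral_fourierChar_gaussian, Complex.coe_smul]

variable {μ : Measure V} {f : V → ℂ}

lemma lintegral_gaussian_enorm_fourierMeasure_sq_le [IsFiniteMeasure μ] {M : ℝ≥0∞}
    (hf : Integrable f μ) (hM : ∀ᵐ y ∂μ, ‖f y‖ₑ ≤ M) (t : ℝ) :
    ∫⁻ z, ‖fourierMeasure μ f (t • z)‖ₑ ^ 2 ∂gaussian V ≤
      M ^ 2 * ∫⁻ x, ∫⁻ y, ENNReal.ofReal (Real.exp (-π * ‖t • (x - y)‖ ^ 2)) ∂μ ∂μ := by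
  let G : V × V → ℝ := fun p => Real.exp (-π * ‖t • (p.1 - p.2)‖ ^ 2)
  let F : V × V → ℂ := fun p => f p.1 * starRingEnd ℂ (f p.2)
  have hF : Integrable F (μ.prod μ) := hf.mul_prod (Complex.conjLIE.integrable_comp_iff.2 hf)
  have hFM : ∀ᵐ p ∂μ.prod μ, ‖F p‖ₑ ≤ M ^ 2 := by
    filter_upwards [Measure.quasiMeasurePreserving_fst.ae hM,
      Measure.quasiMeasurePreserving_snd.ae hM] with p h₁ h₂
    simpa [F, sq] using mul_le_mul' h₁ h₂
  have hcont : Continuous (fourierMeasure μ f) := continuous_fourierMeasure hf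
  have hint : Integrable (fun z => ‖fourierMeasure μ f (t • z)‖ ^ 2) (gaussian V) :=
    .of_bound (by fun_prop) ((∫ y, ‖f y‖ ∂μ) ^ 2) (.of_forall fun z => by
      rw [norm_pow, norm_norm]
      gcongr
      exact norm_fourierMeasure_le_integral_norm _)
  calc ∫⁻ z, ‖fourierMeasure μ f (t • z)‖ₑ ^ 2 ∂gaussian V
      = ∫⁻ z, ENNReal.ofReal (‖fourierMeasure μ f (t • z)‖ ^ 2) ∂gaussian V := by
        simp [ENNReal.ofReal_pow]
    _ = ENNReal.ofReal (∫ z, ‖fourierMeasure μ f (t • z)‖ ^ 2 ∂gaussian V) :=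
        (ofReal_integral_eq_lintegral_ofReal hint (.of_forall fun _ => sq_nonneg _)).symm
    _ ≤ ‖∫ z, ((‖fourierMeasure μ f (t • z)‖ ^ 2 : ℝ) : ℂ) ∂gaussian V‖ₑ := by
        rw [integral_complex_ofReal, ← ofReal_norm, Complex.norm_real]
        gcongr
        exact le_abs_self _
    _ = ‖∫ p, G p • F p ∂μ.prod μ‖ₑ := by
        simp_rw [norm_fourierMeasure_sq_eq_integral]
        rw [integral_gaussian_integral_fourierChar (by fun_prop) hF]
    _ ≤ ∫⁻ p, ‖G p • F p‖ₑ ∂μ.prod μ := enorm_integral_le_lintegral_enorm _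
    _ ≤ ∫⁻ p, M ^ 2 * ENNReal.ofReal (G p) ∂μ.prod μ := by
        refine lintegral_mono_ae (hFM.mono fun p hp => ?_)
        rw [enorm_smul, mul_comm, Real.enorm_of_nonneg (Real.exp_pos _).le]
        gcongr
    _ = M ^ 2 * ∫⁻ x, ∫⁻ y, ENNReal.ofReal (G (x, y)) ∂μ ∂μ := by
        rw [lintegral_const_mul _ (by fun_prop), lintegral_prod _ (by fun_prop)]

-- Multiplying the density by `exp (π ‖y‖ ^ 2)` compensates for averaging the frequency, since the
-- Gaussian is its own Fourier transform.
lemma integral_gaussian_fourierMeasure_exp_smul [SFinite μ]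
    (hf : Integrable (fun y => Real.exp (π * ‖y‖ ^ 2) • f y) μ) (ξ : V) :
    ∫ z, fourierMeasure μ (fun y => Real.exp (π * ‖y‖ ^ 2) • f y) (ξ + z) ∂gaussian V =
      fourierMeasure μ f ξ := by
  let F : V → ℂ := fun y => 𝐞 (-⟪y, ξ⟫) • (Real.exp (π * ‖y‖ ^ 2) • f y)
  have hF : Integrable F μ := integrable_fourierChar_smul hf ξ
  have hchar : ∀ y z : V, 𝐞 (-⟪y, z⟫) • F y =
      𝐞 (-⟪y, ξ + z⟫) • (Real.exp (π * ‖y‖ ^ 2) • f y) := fun y z => by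
    rw [smul_smul, ← AddChar.map_add_eq_mul, inner_add_right, neg_add_rev]
  calc _ = ∫ z, ∫ y, 𝐞 (-⟪y, z⟫) • F y ∂μ ∂gaussian V := by simp_rw [hchar]; rfl
    _ = ∫ y, Real.exp (-π * ‖y‖ ^ 2) • F y ∂μ :=
      integral_gaussian_integral_fourierChar measurable_id hF
    _ = fourierMeasure μ f ξ := by
      refine integral_congr_ae (.of_forall fun y => ?_)
      simp only [F]
      rw [smul_comm, smul_smul, ← Real.exp_add, neg_mul, neg_add_cancel, Real.exp_zero, one_smul]

lemma enorm_fourierMeasure_sq_le_lintegral_gaussian [SFinite μ]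
    (hf : Integrable (fun y => Real.exp (π * ‖y‖ ^ 2) • f y) μ) (ξ : V) :
    ‖fourierMeasure μ f ξ‖ₑ ^ 2 ≤
      ∫⁻ z, ‖fourierMeasure μ (fun y => Real.exp (π * ‖y‖ ^ 2) • f y) (ξ + z)‖ₑ ^ 2
        ∂gaussian V := by
  rw [← integral_gaussian_fourierMeasure_exp_smul hf]
  have hcont := continuous_fourierMeasure hf
  exact enorm_integral_sq_le_lintegral (by fun_prop)

lemma lintegral_gaussian_add_smul {ρ : ℝ} (hρ : ρ ≠ 0) (x : V) (F : V → ℝ≥0∞) :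
    ∫⁻ h, F (x + ρ • h) ∂gaussian V =
      ENNReal.ofReal |(ρ ^ Module.finrank ℝ V)⁻¹| *
        ∫⁻ z, ENNReal.ofReal (Real.exp (-π * ‖ρ⁻¹ • (z - x)‖ ^ 2)) * F z := by
  let G : V → ℝ≥0∞ := fun z => ENNReal.ofReal (Real.exp (-π * ‖ρ⁻¹ • (z - x)‖ ^ 2)) * F z
  calc ∫⁻ h, F (x + ρ • h) ∂gaussian V = ∫⁻ h, G (x + ρ • h) := by
        simp only [lintegral_gaussian, G, add_sub_cancel_left, inv_smul_smul₀ hρ]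
    _ = ∫⁻ h, G (x + h) ∂volume.map (ρ • ·) :=
        ((Homeomorph.smulOfNeZero ρ hρ).measurableEmbedding.lintegral_map
          (fun h => G (x + h))).symm
    _ = ENNReal.ofReal |(ρ ^ Module.finrank ℝ V)⁻¹| * ∫⁻ h, G (x + h) := by
        rw [Measure.map_addHaar_smul volume hρ, lintegral_smul_measure, smul_eq_mul]
    _ = _ := by rw [lintegral_add_left_eq_self]

lemma sq_dist_div_add_sq_norm_sub_le {W : Type*} [SeminormedAddCommGroup W] [NormedSpace ℝ W]
    {R ρ : ℝ} (hρ : ρ ≠ 0) (hρ_le : |ρ| ≤ 1 / 2) {x : W} (hx : ‖x‖ ≤ R) (z : W) :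
    (dist x z / (2 * |ρ|)) ^ 2 + ‖z‖ ^ 2 - 2 * R ^ 2 ≤ ‖ρ⁻¹ • (z - x)‖ ^ 2 := by
  have : 0 < |ρ| := abs_pos.2 hρ
  have htwo : 1 ≤ 1 / (2 * |ρ|) := (one_le_div (by positivity)).2 (by linarith)
  have hdist : dist x z ≤ dist x z / (2 * |ρ|) := by
    simpa [div_eq_mul_inv] using mul_le_mul_of_nonneg_left htwo (dist_nonneg (x := x) (y := z))
  have hnorm : ‖z‖ ≤ dist x z + R := by
    rw [dist_comm, dist_eq_norm]
    linarith [norm_sub_norm_le z x]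
  have hsq : ‖z‖ ^ 2 ≤ 2 * dist x z ^ 2 + 2 * R ^ 2 := by
    nlinarith [norm_nonneg z, sq_nonneg (dist x z - R)]
  have hdist_sq : dist x z ^ 2 ≤ (dist x z / (2 * |ρ|)) ^ 2 := by gcongr
  have hscale : ‖ρ⁻¹ • (z - x)‖ ^ 2 = 4 * (dist x z / (2 * |ρ|)) ^ 2 := by
    rw [norm_smul, norm_inv, Real.norm_eq_abs, ← dist_eq_norm, dist_comm]
    field_simp
    norm_num
  nlinarith [sq_nonneg (dist x z)]

variable {C : ℝ≥0∞} {s R : ℝ}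

lemma IsFrostman.exists_lintegral_exp_neg_norm_inv_smul_le (hμ : IsFrostman μ C s) (hC : C ≠ ∞)
    (hs : 0 ≤ s) (hR : ∀ᵐ x ∂μ, ‖x‖ ≤ R) :
    ∃ K : ℝ≥0∞, K ≠ ∞ ∧ ∀ ρ : ℝ, ρ ≠ 0 → |ρ| ≤ 1 / 2 → ∀ z : V,
      ∫⁻ x, ENNReal.ofReal (Real.exp (-π * ‖ρ⁻¹ • (z - x)‖ ^ 2)) ∂μ ≤
        K * ENNReal.ofReal |ρ| ^ s * ENNReal.ofReal (Real.exp (-π * ‖z‖ ^ 2)) := by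
  obtain ⟨K, hK, hgauss⟩ := hμ.exists_lintegral_exp_neg_sq_le hC hs
  let e : ℝ≥0∞ := ENNReal.ofReal (Real.exp (2 * π * R ^ 2))
  refine ⟨e * K * 2 ^ s, by finiteness, fun ρ hρ hρ_le z => ?_⟩
  let b : ℝ≥0∞ := ENNReal.ofReal (Real.exp (-π * ‖z‖ ^ 2))
  have hpoint : ∀ x : V, ‖x‖ ≤ R → ENNReal.ofReal (Real.exp (-π * ‖ρ⁻¹ • (z - x)‖ ^ 2)) ≤
      e * b * ENNReal.ofReal (Real.exp (-π * (dist x z / (2 * |ρ|)) ^ 2)) := fun x hx => by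
    simp only [e, b]
    rw [← ENNReal.ofReal_mul (by positivity), ← ENNReal.ofReal_mul (by positivity), ← Real.exp_add,
      ← Real.exp_add]
    gcongr
    nlinarith [sq_dist_div_add_sq_norm_sub_le hρ hρ_le hx z, Real.pi_pos]
  calc ∫⁻ x, ENNReal.ofReal (Real.exp (-π * ‖ρ⁻¹ • (z - x)‖ ^ 2)) ∂μ
      ≤ ∫⁻ x, e * b * ENNReal.ofReal (Real.exp (-π * (dist x z / (2 * |ρ|)) ^ 2)) ∂μ :=
        lintegral_mono_ae (hR.mono hpoint)
    _ ≤ e * b * (K * ENNReal.ofReal (2 * |ρ|) ^ s) := by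
        rw [lintegral_const_mul _ (by fun_prop)]
        gcongr
        exact hgauss z _ (by positivity)
    _ = e * K * 2 ^ s * ENNReal.ofReal |ρ| ^ s * b := by
        rw [ENNReal.ofReal_mul zero_le_two, ENNReal.mul_rpow_of_nonneg _ _ hs, ENNReal.ofReal_ofNat]
        ring

lemma IsFrostman.exists_lintegral_lintegral_gaussian_add_smul_le [SFinite μ]
    (hμ : IsFrostman μ C s) (hC : C ≠ ∞) (hs : 0 ≤ s) (hR : ∀ᵐ x ∂μ, ‖x‖ ≤ R) :
    ∃ K : ℝ≥0∞, K ≠ ∞ ∧ ∀ ρ : ℝ, ρ ≠ 0 → |ρ| ≤ 1 / 2 → ∀ F : V → ℝ≥0∞, Measurable F →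
      ∫⁻ x, ∫⁻ h, F (x + ρ • h) ∂gaussian V ∂μ ≤
        K * ENNReal.ofReal |ρ| ^ (s - Module.finrank ℝ V) * ∫⁻ z, F z ∂gaussian V := by
  obtain ⟨K, hK, hgauss⟩ := hμ.exists_lintegral_exp_neg_norm_inv_smul_le hC hs hR
  refine ⟨K, hK, fun ρ hρ hρ_le F hF => ?_⟩
  let J : ℝ≥0∞ := ENNReal.ofReal |(ρ ^ Module.finrank ℝ V)⁻¹|
  have hJ : J = ENNReal.ofReal |ρ| ^ (-Module.finrank ℝ V : ℝ) := by
    rw [ENNReal.ofReal_rpow_of_pos (abs_pos.2 hρ), Real.rpow_neg (abs_nonneg ρ),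
      Real.rpow_natCast, ← abs_pow, ← abs_inv]
  calc ∫⁻ x, ∫⁻ h, F (x + ρ • h) ∂gaussian V ∂μ
      = J * ∫⁻ x, ∫⁻ z, ENNReal.ofReal (Real.exp (-π * ‖ρ⁻¹ • (z - x)‖ ^ 2)) * F z ∂volume ∂μ := by
        simp_rw [lintegral_gaussian_add_smul hρ]
        exact lintegral_const_mul' _ _ ENNReal.ofReal_ne_top
    _ = J * ∫⁻ z, (∫⁻ x, ENNReal.ofReal (Real.exp (-π * ‖ρ⁻¹ • (z - x)‖ ^ 2)) ∂μ) * F z := by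
        rw [lintegral_lintegral_swap (by fun_prop)]
        congr! 3 with z
        exact lintegral_mul_const _ (by fun_prop)
    _ ≤ J * ∫⁻ z, K * ENNReal.ofReal |ρ| ^ s * ENNReal.ofReal (Real.exp (-π * ‖z‖ ^ 2)) * F z := by
        gcongr with z
        exact hgauss ρ hρ hρ_le z
    _ = J * (K * ENNReal.ofReal |ρ| ^ s * ∫⁻ z, F z ∂gaussian V) := by
        simp_rw [mul_assoc, lintegral_gaussian]
        rw [lintegral_const_mul' _ _ hK, lintegral_const_mul _ (by fun_prop)]
    _ = K * ENNReal.ofReal |ρ| ^ (s - Module.finrank ℝ V) * ∫⁻ z, F z ∂gaussian V := by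
        rw [hJ, sub_eq_add_neg, ENNReal.rpow_add _ _ (by simpa using hρ) ENNReal.ofReal_ne_top]
        ring

lemma IsFrostman.exists_lintegral_gaussian_enorm_fourierMeasure_sq_le [IsFiniteMeasure μ]
    (hμ : IsFrostman μ C s) (hC : C ≠ ∞) (hs : 0 ≤ s) :
    ∃ K : ℝ≥0∞, K ≠ ∞ ∧ ∀ (f : V → ℂ) (M : ℝ≥0∞), Integrable f μ → (∀ᵐ y ∂μ, ‖f y‖ₑ ≤ M) →
      ∀ t : ℝ, t ≠ 0 → ∫⁻ z, ‖fourierMeasure μ f (t • z)‖ₑ ^ 2 ∂gaussian V ≤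
        M ^ 2 * (K * ENNReal.ofReal |t| ^ (-s)) := by
  obtain ⟨K, hK, hgauss⟩ := hμ.exists_lintegral_exp_neg_sq_le hC hs
  refine ⟨K * μ univ, by finiteness, fun f M hf hM t ht => ?_⟩
  have hball : ∀ x, ∫⁻ y, ENNReal.ofReal (Real.exp (-π * ‖t • (x - y)‖ ^ 2)) ∂μ ≤
      K * ENNReal.ofReal |t| ^ (-s) := fun x => by
    have h := hgauss x |t|⁻¹ (by positivity)
    rw [ENNReal.ofReal_inv_of_pos (abs_pos.2 ht), ENNReal.inv_rpow, ← ENNReal.rpow_neg] at h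
    simpa [norm_smul, dist_comm, dist_eq_norm, mul_comm] using h
  refine (lintegral_gaussian_enorm_fourierMeasure_sq_le hf hM t).trans ?_
  gcongr
  calc _ ≤ ∫⁻ _, K * ENNReal.ofReal |t| ^ (-s) ∂μ := lintegral_mono hball
    _ = K * μ univ * ENNReal.ofReal |t| ^ (-s) := by rw [lintegral_const]; ring

-- The uncertainty principle: `‖fourierMeasure μ f (t • ·)‖ ^ 2` is dominated by Gaussian averages
-- at scale `1 / |t|`, and at that scale `μ` is at most `|t| ^ (d - s)` times a Gaussian.
theorem IsFrostman.exists_lintegral_enorm_fourierMeasure_sq_le [IsFiniteMeasure μ]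
    (hμ : IsFrostman μ C s) (hC : C ≠ ∞) (hs : 0 ≤ s) (hR : ∀ᵐ x ∂μ, ‖x‖ ≤ R) :
    ∃ K : ℝ≥0∞, K ≠ ∞ ∧ ∀ t : ℝ, 2 ≤ |t| → ∀ f : V → ℂ, AEStronglyMeasurable f μ →
      (∀ y, ‖f y‖ ≤ 1) →
      ∫⁻ x, ‖fourierMeasure μ f (t • x)‖ₑ ^ 2 ∂μ ≤
        K * ENNReal.ofReal |t| ^ (Module.finrank ℝ V - 2 * s) := by
  obtain ⟨A, hA, hcompare⟩ := hμ.exists_lintegral_lintegral_gaussian_add_smul_le hC hs hR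
  obtain ⟨B, hB, hgauss⟩ := hμ.exists_lintegral_gaussian_enorm_fourierMeasure_sq_le hC hs
  let M : ℝ≥0∞ := ENNReal.ofReal (Real.exp (π * R ^ 2))
  refine ⟨A * (M ^ 2 * B), by finiteness, fun t ht f hf hf_le => ?_⟩
  let d : ℝ := Module.finrank ℝ V
  let g : V → ℂ := fun y => Real.exp (π * ‖y‖ ^ 2) • f y
  have ht₀ : t ≠ 0 := abs_pos.1 (by linarith)
  have hg_le : ∀ᵐ y ∂μ, ‖g y‖ ≤ Real.exp (π * R ^ 2) := hR.mono fun y hy => by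
    rw [norm_smul, Real.norm_of_nonneg (Real.exp_pos _).le, ← mul_one (Real.exp (π * R ^ 2))]
    gcongr
    exact hf_le y
  have hg : Integrable g μ := .of_bound (by fun_prop) _ hg_le
  have hgM : ∀ᵐ y ∂μ, ‖g y‖ₑ ≤ M := hg_le.mono fun y hy => by
    rw [← ofReal_norm]
    exact ENNReal.ofReal_le_ofReal hy
  have hcont : Continuous (fourierMeasure μ g) := continuous_fourierMeasure hg
  have hlocal : ∀ x : V, ‖fourierMeasure μ f (t • x)‖ₑ ^ 2 ≤
      ∫⁻ h, ‖fourierMeasure μ g (t • (x + t⁻¹ • h))‖ₑ ^ 2 ∂gaussian V := fun x => by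
    simpa only [smul_add, smul_inv_smul₀ ht₀] using
      enorm_fourierMeasure_sq_le_lintegral_gaussian hg (t • x)
  calc ∫⁻ x, ‖fourierMeasure μ f (t • x)‖ₑ ^ 2 ∂μ
      ≤ ∫⁻ x, ∫⁻ h, ‖fourierMeasure μ g (t • (x + t⁻¹ • h))‖ₑ ^ 2 ∂gaussian V ∂μ :=
        lintegral_mono hlocal
    _ ≤ A * ENNReal.ofReal |t⁻¹| ^ (s - d) *
          ∫⁻ z, ‖fourierMeasure μ g (t • z)‖ₑ ^ 2 ∂gaussian V := by
        refine hcompare t⁻¹ (inv_ne_zero ht₀) ?_ (fun z => ‖fourierMeasure μ g (t • z)‖ₑ ^ 2)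
          (Continuous.measurable (by fun_prop))
        rw [abs_inv, one_div]
        exact inv_anti₀ two_pos ht
    _ ≤ A * ENNReal.ofReal |t⁻¹| ^ (s - d) * (M ^ 2 * (B * ENNReal.ofReal |t| ^ (-s))) := by
        gcongr
        exact hgauss g M hg hgM t ht₀
    _ = A * (M ^ 2 * B) * (ENNReal.ofReal |t| ^ (d - s) * ENNReal.ofReal |t| ^ (-s)) := by
        rw [abs_inv, ENNReal.ofReal_inv_of_pos (abs_pos.2 ht₀), ENNReal.inv_rpow,
          ← ENNReal.rpow_neg, neg_sub]
        ring
    _ = A * (M ^ 2 * B) * ENNReal.ofReal |t| ^ (d - 2 * s) := by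
        rw [← ENNReal.rpow_add _ _ (by simpa using ht₀) ENNReal.ofReal_ne_top]
        ring_nf

end Gaussian

/-! ### The distribution of squared distances -/

section SqDist

variable {V : Type*} [NormedAddCommGroup V] [MeasurableSpace V]

/-- The distribution of the squared distance between two independent points with law `μ`. Squared
distances have the advantage over distances of being polynomial. -/
def sqDistMeasure (μ : Measure V) : Measure ℝ :=
  (μ.prod μ).map fun p => ‖p.1 - p.2‖ ^ 2

variable [BorelSpace V] [SecondCountableTopology V] {μ : Measure V}

lemma measurable_sq_norm_sub : Measurable fun p : V × V => ‖p.1 - p.2‖ ^ 2 := by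
  fun_prop

instance [IsProbabilityMeasure μ] : IsProbabilityMeasure (sqDistMeasure μ) :=
  Measure.isProbabilityMeasure_map measurable_sq_norm_sub.aemeasurable

lemma volume_image2_dist_pos_of_absolutelyContinuous [IsProbabilityMeasure μ] {E : Set V}
    (hE : IsCompact E) (hμE : ∀ᵐ x ∂μ, x ∈ E) (hac : sqDistMeasure μ ≪ volume) :
    0 < volume (image2 dist E E) := by
  rw [pos_iff_ne_zero]
  intro hzero
  have hcpt : IsCompact ((· ^ 2) '' image2 dist E E) := by
    rw [← image_prod]
    exact ((hE.prod hE).image continuous_dist).image (continuous_pow 2)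
  have hmem : ∀ᵐ r ∂sqDistMeasure μ, r ∈ (· ^ 2) '' image2 dist E E := by
    refine (ae_map_iff measurable_sq_norm_sub.aemeasurable hcpt.measurableSet).2 ?_
    filter_upwards [Measure.quasiMeasurePreserving_fst.ae hμE,
      Measure.quasiMeasurePreserving_snd.ae hμE] with p hp₁ hp₂
    exact ⟨dist p.1 p.2, mem_image2_of_mem hp₁ hp₂, by rw [dist_eq_norm]⟩
  have hnull : volume ((· ^ 2) '' image2 dist E E) = 0 :=
    addHaar_image_eq_zero_of_differentiableOn_of_addHaar_eq_zero volume (by fun_prop) hzero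
  obtain ⟨r, hr, hr'⟩ := (hmem.and (measure_eq_zero_iff_ae_notMem.1 (hac hnull))).exists
  exact hr' hr

variable [InnerProductSpace ℝ V]

-- Expanding `‖x - y‖ ^ 2`, the cross term `2 ⟪x, y⟫` makes the inner integral a Fourier transform.
lemma fourierMeasure_sqDistMeasure [IsFiniteMeasure μ] (t : ℝ) :
    fourierMeasure (sqDistMeasure μ) 1 t =
      ∫ x, 𝐞 (-(t * ‖x‖ ^ 2)) •
        fourierMeasure μ (fun y => (𝐞 (-(t * ‖y‖ ^ 2)) : ℂ)) ((-(2 * t)) • x) ∂μ := by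
  have hpoint : ∀ x y : V, 𝐞 (-⟪‖x - y‖ ^ 2, t⟫) • (1 : ℂ) =
      𝐞 (-(t * ‖x‖ ^ 2)) • 𝐞 (-⟪y, (-(2 * t)) • x⟫) • (𝐞 (-(t * ‖y‖ ^ 2)) : ℂ) := fun x y => by
    have hexpand : -⟪‖x - y‖ ^ 2, t⟫ =
        -(t * ‖x‖ ^ 2) + (-⟪y, (-(2 * t)) • x⟫ + -(t * ‖y‖ ^ 2)) := by
      rw [norm_sub_sq_real, inner_smul_right, real_inner_comm x y]
      simp only [RCLike.inner_apply, conj_trivial]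
      ring
    simp only [hexpand, AddChar.map_add_eq_mul, Circle.smul_def, Circle.coe_mul, smul_eq_mul,
      mul_one]
  have hint : Integrable (fun p : V × V => 𝐞 (-⟪‖p.1 - p.2‖ ^ 2, t⟫) • (1 : ℂ)) (μ.prod μ) :=
    .of_bound (by fun_prop) 1 (.of_forall fun p => by simp)
  rw [fourierMeasure, sqDistMeasure, integral_map measurable_sq_norm_sub.aemeasurable (by fun_prop)]
  simp only [Pi.one_apply]
  rw [integral_prod _ hint]
  refine integral_congr_ae (.of_forall fun x => ?_)
  simp only [hpoint]
  exact integral_const_mul _ _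

lemma enorm_fourierMeasure_sqDistMeasure_sq_le [IsProbabilityMeasure μ] (t : ℝ) :
    ‖fourierMeasure (sqDistMeasure μ) 1 t‖ₑ ^ 2 ≤
      ∫⁻ x, ‖fourierMeasure μ (fun y => (𝐞 (-(t * ‖y‖ ^ 2)) : ℂ)) ((-(2 * t)) • x)‖ₑ ^ 2 ∂μ := by
  have hcont : Continuous (fourierMeasure μ fun y => (𝐞 (-(t * ‖y‖ ^ 2)) : ℂ)) :=
    continuous_fourierMeasure
      (.of_bound (by fun_prop) 1 (.of_forall fun y => (Circle.norm_coe _).le))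
  rw [fourierMeasure_sqDistMeasure]
  refine (enorm_integral_sq_le_lintegral (by fun_prop)).trans_eq ?_
  simp_rw [← ofReal_norm, Circle.norm_smul]

end SqDist

section Decay

variable {V : Type*} [NormedAddCommGroup V] [InnerProductSpace ℝ V] [FiniteDimensional ℝ V]
  [MeasurableSpace V] [BorelSpace V] {μ : Measure V} [IsProbabilityMeasure μ] {C : ℝ≥0∞} {s R : ℝ}

lemma IsFrostman.exists_enorm_fourierMeasure_sqDistMeasure_sq_le (hμ : IsFrostman μ C s)
    (hC : C ≠ ∞) (hs : (Module.finrank ℝ V : ℝ) ≤ 2 * s) (hR : ∀ᵐ x ∂μ, ‖x‖ ≤ R) :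
    ∃ K : ℝ≥0∞, K ≠ ∞ ∧ ∀ t : ℝ, ‖fourierMeasure (sqDistMeasure μ) 1 t‖ₑ ^ 2 ≤
      K * ENNReal.ofReal (1 + |t|) ^ (Module.finrank ℝ V - 2 * s) := by
  have hs₀ : 0 ≤ s := by linarith [Nat.cast_nonneg (α := ℝ) (Module.finrank ℝ V)]
  obtain ⟨K, hK, hdecay⟩ := hμ.exists_lintegral_enorm_fourierMeasure_sq_le hC hs₀ hR
  obtain ⟨a, ha⟩ : ∃ a, a = 2 * s - Module.finrank ℝ V := ⟨_, rfl⟩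
  have hneg : (Module.finrank ℝ V : ℝ) - 2 * s = -a := by rw [ha, neg_sub]
  have ha₀ : 0 ≤ a := by rw [ha]; linarith
  rw [hneg] at hdecay ⊢
  refine ⟨K + 2 ^ a, by finiteness, fun t => ?_⟩
  obtain ht | ht := le_total 1 |t|
  · have hgrow : 1 + |t| ≤ |-(2 * t)| := by
      rw [abs_neg, abs_mul, abs_two]
      linarith
    calc ‖fourierMeasure (sqDistMeasure μ) 1 t‖ₑ ^ 2
        ≤ K * ENNReal.ofReal |-(2 * t)| ^ (-a) :=
          (enorm_fourierMeasure_sqDistMeasure_sq_le t).trans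
            (hdecay _ (by linarith) _ (by fun_prop) fun y => (Circle.norm_coe _).le)
      _ ≤ (K + 2 ^ a) * ENNReal.ofReal (1 + |t|) ^ (-a) := by
          rw [ENNReal.rpow_neg, ENNReal.rpow_neg]
          gcongr
          exact le_self_add
  · have hbound : ‖fourierMeasure (sqDistMeasure μ) 1 t‖ₑ ≤ 1 := by
      rw [← ofReal_norm, ENNReal.ofReal_le_one]
      exact (norm_fourierMeasure_le_integral_norm t).trans_eq (by simp)
    calc ‖fourierMeasure (sqDistMeasure μ) 1 t‖ₑ ^ 2 ≤ 1 := pow_le_one' hbound 2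
      _ = 2 ^ a * 2 ^ (-a) := by
          rw [← ENNReal.rpow_add _ _ two_ne_zero ENNReal.ofNat_ne_top, add_neg_cancel,
            ENNReal.rpow_zero]
      _ ≤ (K + 2 ^ a) * ENNReal.ofReal (1 + |t|) ^ (-a) := by
          rw [ENNReal.rpow_neg, ENNReal.rpow_neg]
          gcongr
          · exact le_add_self
          · exact ENNReal.ofReal_le_of_le_toReal (by simp; linarith)

lemma IsFrostman.lintegral_enorm_fourierMeasure_sqDistMeasure_sq_lt_top (hμ : IsFrostman μ C s)
    (hC : C ≠ ∞) (hs : (Module.finrank ℝ V : ℝ) + 1 < 2 * s) (hR : ∀ᵐ x ∂μ, ‖x‖ ≤ R) :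
    ∫⁻ t, ‖fourierMeasure (sqDistMeasure μ) 1 t‖ₑ ^ 2 < ∞ := by
  obtain ⟨K, hK, hdecay⟩ :=
    hμ.exists_enorm_fourierMeasure_sqDistMeasure_sq_le hC (by linarith) hR
  have hint : Integrable fun t : ℝ => (1 + ‖t‖) ^ (-(2 * s - Module.finrank ℝ V)) :=
    integrable_one_add_norm (by rw [Module.finrank_self]; push_cast; linarith)
  calc ∫⁻ t, ‖fourierMeasure (sqDistMeasure μ) 1 t‖ₑ ^ 2
      ≤ ∫⁻ t : ℝ, K * ENNReal.ofReal ((1 + ‖t‖) ^ (-(2 * s - Module.finrank ℝ V))) :=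
        lintegral_mono fun t => by
          rw [← ENNReal.ofReal_rpow_of_pos (by positivity), neg_sub]
          exact hdecay t
    _ = K * ∫⁻ t : ℝ, ENNReal.ofReal ((1 + ‖t‖) ^ (-(2 * s - Module.finrank ℝ V))) :=
        lintegral_const_mul' _ _ hK
    _ < ∞ := ENNReal.mul_lt_top hK.lt_top hint.lintegral_lt_top

theorem IsFrostman.sqDistMeasure_absolutelyContinuous (hμ : IsFrostman μ C s) (hC : C ≠ ∞)
    (hs : (Module.finrank ℝ V : ℝ) + 1 < 2 * s) (hR : ∀ᵐ x ∂μ, ‖x‖ ≤ R) :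
    sqDistMeasure μ ≪ volume :=
  absolutelyContinuous_of_lintegral_enorm_fourierMeasure_sq_lt_top
    (hμ.lintegral_enorm_fourierMeasure_sqDistMeasure_sq_lt_top hC hs hR)

end Decay

end Falconer

open Falconer in
theorem stmt15_general {V : Type*} [NormedAddCommGroup V] [InnerProductSpace ℝ V]
    [FiniteDimensional ℝ V] {E : Set V} (hE : IsCompact E)
    (hdim : ((Module.finrank ℝ V : ℝ≥0∞) + 1) / 2 < dimH E) :
    0 < volume (image2 dist E E) := by
  borelize V
  obtain ⟨s, hs, hsE⟩ := ENNReal.lt_iff_exists_nnreal_btwn.1 hdim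
  have hs₂ : (Module.finrank ℝ V : ℝ) + 1 < 2 * s := by
    rw [ENNReal.div_lt_iff (by simp) (by simp)] at hs
    have h : (Module.finrank ℝ V : NNReal) + 1 < s * 2 := by exact_mod_cast hs
    rw [mul_comm]
    exact_mod_cast h
  have hs₀ : (0 : ℝ) < s := by linarith [Nat.cast_nonneg (α := ℝ) (Module.finrank ℝ V)]
  obtain ⟨R, hR⟩ := hE.isBounded.exists_norm_le
  obtain ⟨μ, C, hμ₁, hμE, hC, hμ⟩ :=
    exists_isFrostman hE hs₀ (by simp [hausdorffMeasure_of_lt_dimH hsE])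
  have hE_ae : ∀ᵐ x ∂μ, x ∈ E := measure_eq_zero_iff_ae_notMem.1 hμE |>.mono fun _ => not_not.1
  exact volume_image2_dist_pos_of_absolutelyContinuous hE hE_ae
    (hμ.sqDistMeasure_absolutelyContinuous hC hs₂ (hE_ae.mono hR))

theorem stmt15 (d : ℕ) (hd : 2 ≤ d) (E : Set (Pt d)) (hE : IsCompact E)
    (hdim : ((d : ℝ≥0∞) + 1) / 2 < dimH E) :
    0 < volume (distSet d E) := by
  exact stmt15_general hE (by rwa [finrank_euclideanSpace_fin])
end
end

section
/- For every ε > 0 there exists a constant C_ε such that for every positive integer q, the number of congruence classes of triangles with vertices in the lattice grid ℤ² ∩ [0,q]² is at most C_ε q^{4+ε}; equivalently, the number of distinct triples (|x−y|, |x−z|, |y−z|) arising (up to permutation of the three entries) from points x, y, z ∈ ℤ² ∩ [0,q]² is at most C_ε q^{4+ε}. -/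
open MeasureTheory Metric Set Topology
open scoped ENNReal

noncomputable section

/-- `ℝ²` as Euclidean space. -/
abbrev Pt2 := EuclideanSpace ℝ (Fin 2)

/-- The point of `ℝ²` with the given integer coordinates. -/
def toPt2 (x : Fin 2 → ℤ) : Pt2 :=
  (EuclideanSpace.equiv (Fin 2) ℝ).symm fun i => (x i : ℝ)

/-- The set of congruence classes of triangles with vertices in `ℤ² ∩ [0,q]²`, encoded as
the set of unordered triples (multisets) of pairwise distances `{|x-y|, |x-z|, |y-z|}`. -/
def triangleClasses (q : ℕ) : Set (Multiset ℝ) :=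
  {m | ∃ x y z : Fin 2 → ℤ,
    (∀ i, x i ∈ Icc (0 : ℤ) q) ∧ (∀ i, y i ∈ Icc (0 : ℤ) q) ∧ (∀ i, z i ∈ Icc (0 : ℤ) q) ∧
    m = {dist (toPt2 x) (toPt2 y), dist (toPt2 x) (toPt2 z), dist (toPt2 y) (toPt2 z)}}

/-- The unordered triple of side lengths of the triangle `x y z`: the complete congruence invariant
whose values on lattice triangles make up `triangleClasses`. It is a multiset, so that repeated
lengths are kept. -/
def sideLengths {α : Type*} [Dist α] (x y z : α) : Multiset ℝ :=
  {dist x y, dist x z, dist y z}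

lemma sideLengths_sub_right {α : Type*} [AddGroup α] [PseudoMetricSpace α]
    [IsIsometricVAdd αᵃᵒᵖ α] (x y z a : α) :
    sideLengths (x - a) (y - a) (z - a) = sideLengths x y z := by
  simp only [sideLengths, dist_sub_right]

lemma toPt2_sub (x y : Fin 2 → ℤ) : toPt2 (x - y) = toPt2 x - toPt2 y := by
  ext i
  simp [toPt2]

lemma sub_mem_Icc_neg {α : Type*} [AddCommGroup α] [Preorder α] [IsOrderedAddMonoid α]
    {a b c : α} (ha : a ∈ Icc 0 c) (hb : b ∈ Icc 0 c) : a - b ∈ Icc (-c) c := by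
  refine ⟨?_, (sub_le_self a hb.1).trans ha.2⟩
  simpa only [zero_sub] using sub_le_sub ha.1 hb.2

lemma encard_Icc_neg_natCast (ι : Type*) [Fintype ι] (n : ℕ) :
    (Icc (-(n : ι → ℤ)) n).encard = (2 * n + 1) ^ Fintype.card ι := by
  classical
  have side (i : ι) : (((n : ι → ℤ) i) + 1 - (-(n : ι → ℤ)) i).toNat = 2 * n + 1 := by
    simp only [Pi.neg_apply, Pi.natCast_apply]
    lia
  rw [← Finset.coe_Icc, encard_coe_eq_coe_finsetCard, Pi.card_Icc]
  simp only [Int.card_Icc, side, Finset.prod_const, Finset.card_univ]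
  norm_cast

/- Moving one vertex to the origin by a translation leaves two lattice vectors to choose instead of
three, which brings the exponent in the count down from `6` to `4`. -/
lemma triangleClasses_subset_image (q : ℕ) :
    triangleClasses q ⊆ (fun p : (Fin 2 → ℤ) × (Fin 2 → ℤ) ↦
      sideLengths (toPt2 0) (toPt2 p.1) (toPt2 p.2)) ''
        (Icc (-(q : Fin 2 → ℤ)) q ×ˢ Icc (-(q : Fin 2 → ℤ)) q) := by
  rintro _ ⟨x, y, z, hx, hy, hz, rfl⟩
  have mem_box {w : Fin 2 → ℤ} (hw : ∀ i, w i ∈ Icc (0 : ℤ) q) : w ∈ Icc 0 (q : Fin 2 → ℤ) :=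
    ⟨fun i ↦ (hw i).1, fun i ↦ (hw i).2⟩
  refine ⟨(y - x, z - x), ⟨sub_mem_Icc_neg (mem_box hy) (mem_box hx),
    sub_mem_Icc_neg (mem_box hz) (mem_box hx)⟩, ?_⟩
  calc sideLengths (toPt2 0) (toPt2 (y - x)) (toPt2 (z - x))
      = sideLengths (toPt2 x - toPt2 x) (toPt2 y - toPt2 x) (toPt2 z - toPt2 x) := by
        rw [← sub_self x, toPt2_sub, toPt2_sub, toPt2_sub]
    _ = sideLengths (toPt2 x) (toPt2 y) (toPt2 z) := sideLengths_sub_right ..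

lemma encard_triangleClasses_le (q : ℕ) : (triangleClasses q).encard ≤ (2 * q + 1) ^ 4 :=
  calc (triangleClasses q).encard
      ≤ (Icc (-(q : Fin 2 → ℤ)) q ×ˢ Icc (-(q : Fin 2 → ℤ)) q).encard :=
        (encard_le_encard (triangleClasses_subset_image q)).trans (encard_image_le _ _)
    _ = (2 * q + 1) ^ 2 * (2 * q + 1) ^ 2 := by
        rw [encard_prod, encard_Icc_neg_natCast, Fintype.card_fin]
    _ = (2 * q + 1) ^ 4 := by ring

theorem stmt16_general {q : ℕ} (hq : 0 < q) :
    ((triangleClasses q).ncard : ℝ) ≤ 81 * (q : ℝ) ^ (4 : ℝ) := by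
  have hcard : (triangleClasses q).ncard ≤ (2 * q + 1) ^ 4 :=
    ENat.toNat_le_of_le_natCast (mod_cast encard_triangleClasses_le q)
  have hpow : (2 * q + 1) ^ 4 ≤ 81 * q ^ 4 :=
    calc (2 * q + 1) ^ 4 ≤ (3 * q) ^ 4 := by gcongr; lia
      _ = 81 * q ^ 4 := by ring
  exact_mod_cast hcard.trans hpow

theorem stmt16 (ε : ℝ) (hε : 0 < ε) :
    ∃ C : ℝ, ∀ q : ℕ, 0 < q →
      ((triangleClasses q).ncard : ℝ) ≤ C * (q : ℝ) ^ ((4 : ℝ) + ε) := by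
  refine ⟨81, fun q hq ↦ (stmt16_general hq).trans ?_⟩
  gcongr
  exacts [mod_cast hq, le_add_of_nonneg_right hε.le]
end
end

section
/- Let d ≥ 2, 1 ≤ k ≤ d, let E ⊂ ℝ^d be compact, let μ be a finite nonnegative Borel measure supported on E, and let ν be the measure on ℝ^{k(k+1)/2} defined by ∫ f(t) dν(t) = ∫⋯∫ f((|x^i − x^j|)_{1≤i<j≤k+1}) dμ(x^1)⋯dμ(x^{k+1}). If liminf_{ε→0} ε^{−k(k+1)/2} μ^{2(k+1)}{ (x^1,…,x^{k+1}, y^1,…,y^{k+1}) ∈ (ℝ^d)^{2(k+1)} : | |x^i−x^j| − |y^i−y^j| | ≤ ε for all 1 ≤ i < j ≤ k+1 } is finite, then ν is absolutely continuous with respect to Lebesgue measure on ℝ^{k(k+1)/2} with an L² density ν(t), and ∫ ν(t)² dt ≤ c_{k,d} times that liminf, for a constant c_{k,d} depending only on k and d. -/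
open MeasureTheory Metric Set Topology
open scoped ENNReal

noncomputable section

/-- The index set of pairs `i < j` in `{1, …, k+1}`; it has `k(k+1)/2` elements. -/
abbrev PairIdx (k : ℕ) : Type := {p : Fin (k+1) × Fin (k+1) // p.1 < p.2}

/-- The map sending a `(k+1)`-tuple of points to its vector of pairwise distances. -/
def simplexMap (d k : ℕ) (x : Fin (k+1) → Pt d) : PairIdx k → ℝ :=
  fun p => dist (x p.1.1) (x p.1.2)

/-- A `(k+1)`-tuple is nondegenerate if `x^2 - x^1, …, x^{k+1} - x^1` are linearly
independent. -/
def Nondeg (d k : ℕ) (x : Fin (k+1) → Pt d) : Prop :=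
  LinearIndependent ℝ (fun i : Fin k => x i.succ - x 0)

/-- `T_k(E)`: the set of congruence classes of nondegenerate `k`-simplices with vertices in `E`,
realized as a subset of `ℝ^{k(k+1)/2}` via the pairwise-distance map. -/
def Tconf (d k : ℕ) (E : Set (Pt d)) : Set (PairIdx k → ℝ) :=
  simplexMap d k '' {x | (∀ i, x i ∈ E) ∧ Nondeg d k x}

/-- The measure `ν` on `ℝ^{k(k+1)/2}` determined by
`∫ f dν = ∫⋯∫ f((|xⁱ - xʲ|)_{i<j}) dμ(x¹)⋯dμ(x^{k+1})`, i.e. the pushforward of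
`μ^{k+1}` under the pairwise-distance map. -/
def nuSimplex (d k : ℕ) (μ : Measure (Pt d)) : Measure (PairIdx k → ℝ) :=
  Measure.map (simplexMap d k) (Measure.pi fun _ : Fin (k+1) => μ)

/-- The set of pairs of `(k+1)`-tuples `(x, y)` whose corresponding pairwise distances
all agree up to `ε`. -/
def approxCongr (d k : ℕ) (ε : ℝ) :
    Set ((Fin (k+1) → Pt d) × (Fin (k+1) → Pt d)) :=
  {z | ∀ i j : Fin (k+1), i < j → |dist (z.1 i) (z.1 j) - dist (z.2 i) (z.2 j)| ≤ ε}

/-- `liminf_{ε → 0⁺} ε^{-k(k+1)/2} μ^{2(k+1)} {(x, y) : ||xⁱ-xʲ| - |yⁱ-yʲ|| ≤ ε ∀ i<j}`,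
where `μ^{2(k+1)}` is the product of `2(k+1)` copies of `μ`. -/
def thickLiminf (d k : ℕ) (μ : Measure (Pt d)) : ℝ≥0∞ :=
  Filter.liminf
    (fun ε : ℝ => (ENNReal.ofReal ε)⁻¹ ^ (k * (k+1) / 2) *
      ((Measure.pi fun _ : Fin (k+1) => μ).prod (Measure.pi fun _ : Fin (k+1) => μ))
        (approxCongr d k ε))
    (𝓝[>] (0 : ℝ))

/-!
Let `f_r(t) = ν(B(t, r)) / |B(t, r)|`. By Tonelli, `∫ f_r ^ 2` is the `ν × ν`-mass of the pairs
`(s, t)`, weighted by `|B(s, r) ∩ B(t, r)| / |B(0, r)| ^ 2`, hence at most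
`(ν × ν) {dist ≤ 2 r} / |B(0, r)|`; for the sup norm on `ℝ^n` and `ε = 2 r` this is
`ε ^ (-n) (ν × ν) {dist ≤ ε}`, the quantity whose liminf is assumed finite.

Let `L = liminf ∫ f_r ^ 2`. As `f_r dt → ν` weakly, Cauchy–Schwarz gives `ν(U) ^ 2 ≤ |U| L` for open
`U`, whence `ν ≪ dt` by outer regularity. As `f_r → dν/dt` almost everywhere by Besicovitch
differentiation, Fatou's lemma gives `∫ (dν/dt) ^ 2 ≤ L`.
-/

theorem sq_lintegral_le_measure_univ_mul {α : Type*} [MeasurableSpace α] {μ : Measure α}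
    {f : α → ℝ≥0∞} (hf : AEMeasurable f μ) :
    (∫⁻ x, f x ∂μ) ^ 2 ≤ μ univ * ∫⁻ x, f x ^ 2 ∂μ := by
  have cauchy_schwarz : ∫⁻ x, f x ∂μ ≤ (∫⁻ x, f x ^ 2 ∂μ) ^ (1 / 2 : ℝ) * μ univ ^ (1 / 2 : ℝ) := by
    simpa using ENNReal.lintegral_mul_le_Lp_mul_Lq μ Real.HolderConjugate.two_two hf
      (aemeasurable_const (b := (1 : ℝ≥0∞)))
  calc (∫⁻ x, f x ∂μ) ^ 2
      ≤ ((∫⁻ x, f x ^ 2 ∂μ) ^ (1 / 2 : ℝ) * μ univ ^ (1 / 2 : ℝ)) ^ 2 := by gcongr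
    _ = μ univ * ∫⁻ x, f x ^ 2 ∂μ := by
      rw [mul_pow, ← ENNReal.rpow_mul_natCast, ← ENNReal.rpow_mul_natCast, mul_comm]
      norm_num

section BallDensity

variable {X : Type*} [PseudoMetricSpace X] [MeasurableSpace X]

/-- The density of `ν` relative to `μ` averaged over the closed ball of radius `r` about `x`; it
mollifies `ν` at scale `r`. -/
def ballDensity (μ ν : Measure X) (r : ℝ) (x : X) : ℝ≥0∞ :=
  ν (closedBall x r) / μ (closedBall x r)

/-- The lower limit, as the scale tends to zero, of the squared `L²(μ)` norms of the mollifications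
of `ν`. -/
def lowerSqDensity (μ ν : Measure X) : ℝ≥0∞ :=
  Filter.liminf (fun r => ∫⁻ x, ballDensity μ ν r x ^ 2 ∂μ) (𝓝[>] (0 : ℝ))

theorem eventually_ballDensity_restrict_eq_one [ProperSpace X] (μ : Measure X)
    [IsLocallyFiniteMeasure μ] [μ.IsOpenPosMeasure] {U : Set X} (hU : IsOpen U) {x : X}
    (hx : x ∈ U) :
    ∀ᶠ r in 𝓝[>] (0 : ℝ), ballDensity μ (μ.restrict U) r x = 1 := by
  obtain ⟨δ, hδ, hball⟩ := Metric.isOpen_iff.1 hU x hx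
  filter_upwards [Ioo_mem_nhdsGT hδ] with r hr
  rw [ballDensity, Measure.restrict_eq_self _ ((closedBall_subset_ball hr.2).trans hball),
    ENNReal.div_self (measure_closedBall_pos μ x hr.1).ne' measure_closedBall_lt_top.ne]

variable [SecondCountableTopology X] [OpensMeasurableSpace X]

theorem measurable_measure_closedBall (ν : Measure X) [SFinite ν] (r : ℝ) :
    Measurable fun x => ν (closedBall x r) :=
  measurable_measure_prodMk_left (s := {p : X × X | dist p.2 p.1 ≤ r})
    (measurableSet_le (by fun_prop) measurable_const)

theorem lintegral_measure_closedBall_comm (μ ν : Measure X) [SFinite μ] [SFinite ν] (r : ℝ) :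
    ∫⁻ x, ν (closedBall x r) ∂μ = ∫⁻ y, μ (closedBall y r) ∂ν := by
  have hs : MeasurableSet {p : X × X | dist p.2 p.1 ≤ r} :=
    measurableSet_le (by fun_prop) measurable_const
  calc ∫⁻ x, ν (closedBall x r) ∂μ = (μ.prod ν) {p | dist p.2 p.1 ≤ r} :=
        (Measure.prod_apply hs).symm
    _ = ∫⁻ y, μ {x | dist y x ≤ r} ∂ν := Measure.prod_apply_symm hs
    _ = ∫⁻ y, μ (closedBall y r) ∂ν := lintegral_congr fun y => by simp only [dist_comm y]; rfl

theorem lintegral_sq_measure_closedBall (μ ν : Measure X) [SFinite μ] [SFinite ν] (r : ℝ) :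
    ∫⁻ x, ν (closedBall x r) ^ 2 ∂μ =
      ∫⁻ z, μ (closedBall z.1 r ∩ closedBall z.2 r) ∂(ν.prod ν) := by
  have hs : MeasurableSet {p : X × X × X | dist p.2 (p.1, p.1) ≤ r} :=
    measurableSet_le (by fun_prop) measurable_const
  calc ∫⁻ x, ν (closedBall x r) ^ 2 ∂μ = ∫⁻ x, (ν.prod ν) (closedBall (x, x) r) ∂μ := by
        simp_rw [sq, ← Measure.prod_prod, closedBall_prod_same]
    _ = (μ.prod (ν.prod ν)) {p | dist p.2 (p.1, p.1) ≤ r} := (Measure.prod_apply hs).symm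
    _ = ∫⁻ z, μ {x | dist z (x, x) ≤ r} ∂(ν.prod ν) := Measure.prod_apply_symm hs
    _ = ∫⁻ z, μ (closedBall z.1 r ∩ closedBall z.2 r) ∂(ν.prod ν) := by
        refine lintegral_congr fun z => congrArg μ ?_
        ext x
        simp [Prod.dist_eq, dist_comm x]

theorem measurable_ballDensity (μ ν : Measure X) [SFinite μ] [SFinite ν] (r : ℝ) :
    Measurable (ballDensity μ ν r) :=
  (measurable_measure_closedBall ν r).div (measurable_measure_closedBall μ r)

end BallDensity

theorem isLocallyFiniteMeasure_of_lowerSqDensity_ne_top {X : Type*} [PseudoMetricSpace X]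
    [ProperSpace X] [MeasurableSpace X] [OpensMeasurableSpace X] (μ : Measure X)
    [IsLocallyFiniteMeasure μ] [μ.IsOpenPosMeasure] {ν : Measure X} [SFinite ν]
    (h : lowerSqDensity μ ν ≠ ⊤) : IsLocallyFiniteMeasure ν := by
  obtain ⟨r, h_lt, hr⟩ : ∃ r : ℝ, ∫⁻ x, ballDensity μ ν r x ^ 2 ∂μ < ⊤ ∧ 0 < r :=
    ((Filter.frequently_lt_of_liminf_lt (by isBoundedDefault) h.lt_top).and_eventually
      self_mem_nhdsWithin).exists
  have ae_lt_top : ∀ᵐ x ∂μ, ν (closedBall x r) < ⊤ := by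
    filter_upwards [ae_lt_top ((measurable_ballDensity μ ν r).pow_const 2) h_lt.ne] with x hx
    contrapose! hx
    rw [top_le_iff] at hx ⊢
    rw [ballDensity, hx, ENNReal.top_div_of_ne_top measure_closedBall_lt_top.ne,
      ENNReal.top_pow two_ne_zero]
  refine ⟨fun y => ?_⟩
  obtain ⟨x, hx, hxy⟩ := (Measure.dense_of_ae ae_lt_top).exists_dist_lt y hr
  exact ⟨closedBall x r, closedBall_mem_nhds_of_mem (by simpa using hxy), hx⟩

theorem lintegral_sq_rnDeriv_le_lowerSqDensity {X : Type*} [MetricSpace X] [ProperSpace X]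
    [HasBesicovitchCovering X] [MeasurableSpace X] [BorelSpace X] (μ ν : Measure X)
    [IsLocallyFiniteMeasure μ] [μ.IsOpenPosMeasure] [SFinite ν] :
    ∫⁻ x, ν.rnDeriv μ x ^ 2 ∂μ ≤ lowerSqDensity μ ν := by
  rcases eq_or_ne (lowerSqDensity μ ν) ⊤ with h_top | h_ne_top
  · exact h_top ▸ le_top
  have := isLocallyFiniteMeasure_of_lowerSqDensity_ne_top μ h_ne_top
  calc ∫⁻ x, ν.rnDeriv μ x ^ 2 ∂μ
      = ∫⁻ x, Filter.liminf (fun r => ballDensity μ ν r x ^ 2) (𝓝[>] (0 : ℝ)) ∂μ := by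
        refine lintegral_congr_ae ?_
        filter_upwards [Besicovitch.ae_tendsto_rnDeriv ν μ] with x hx
        exact (ENNReal.Tendsto.pow hx).liminf_eq.symm
    _ ≤ lowerSqDensity μ ν :=
        lintegral_liminf_le fun r => (measurable_ballDensity μ ν r).pow_const 2

section AddHaar

variable {E : Type*} [NormedAddCommGroup E] [MeasurableSpace E] [BorelSpace E]
  (μ : Measure E) [μ.IsAddHaarMeasure]

theorem measure_closedBall_inter_closedBall_le (r : ℝ) (x y : E) :
    μ (closedBall x r ∩ closedBall y r) ≤
      {z : E × E | dist z.1 z.2 ≤ 2 * r}.indicator (fun _ => μ (closedBall 0 r)) (x, y) := by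
  by_cases hxy : dist x y ≤ 2 * r
  · rw [indicator_of_mem (by exact hxy), ← μ.addHaar_closedBall_center x]
    exact measure_mono inter_subset_left
  · have hdisj : Disjoint (closedBall x r) (closedBall y r) :=
      closedBall_disjoint_closedBall (by linarith)
    rw [hdisj.inter_eq, measure_empty]
    exact zero_le

variable [ProperSpace E]

theorem lintegral_ballDensity_comm (ν ρ : Measure E) [SFinite ν] [SFinite ρ] (r : ℝ) :
    ∫⁻ x, ballDensity μ ν r x ∂ρ = ∫⁻ y, ballDensity μ ρ r y ∂ν := by
  simp_rw [ballDensity, Measure.addHaar_closedBall_center μ _ r, div_eq_mul_inv]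
  rw [lintegral_mul_const _ (measurable_measure_closedBall ν r),
    lintegral_mul_const _ (measurable_measure_closedBall ρ r), lintegral_measure_closedBall_comm]

theorem lintegral_sq_ballDensity_le (ν : Measure E) [SFinite ν] {r : ℝ} (hr : 0 < r) :
    ∫⁻ x, ballDensity μ ν r x ^ 2 ∂μ ≤
      (μ (closedBall 0 r))⁻¹ * (ν.prod ν) {z | dist z.1 z.2 ≤ 2 * r} := by
  set V := μ (closedBall 0 r) with hV
  have hV_ne_zero : V ≠ 0 := (measure_closedBall_pos μ 0 hr).ne'
  have hV_ne_top : V ≠ ⊤ := measure_closedBall_lt_top.ne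
  have hs : MeasurableSet {z : E × E | dist z.1 z.2 ≤ 2 * r} :=
    measurableSet_le measurable_dist measurable_const
  have sq_le : ∫⁻ x, ν (closedBall x r) ^ 2 ∂μ ≤ V * (ν.prod ν) {z | dist z.1 z.2 ≤ 2 * r} := by
    rw [lintegral_sq_measure_closedBall, ← lintegral_indicator_const hs]
    exact lintegral_mono fun z => measure_closedBall_inter_closedBall_le μ r z.1 z.2
  calc ∫⁻ x, ballDensity μ ν r x ^ 2 ∂μ
      = (∫⁻ x, ν (closedBall x r) ^ 2 ∂μ) * V⁻¹ ^ 2 := by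
        simp_rw [ballDensity, μ.addHaar_closedBall_center _ r, ← hV, div_eq_mul_inv, mul_pow]
        exact lintegral_mul_const _ ((measurable_measure_closedBall ν r).pow_const 2)
    _ ≤ V * (ν.prod ν) {z | dist z.1 z.2 ≤ 2 * r} * V⁻¹ ^ 2 := by gcongr
    _ = V * V⁻¹ * (V⁻¹ * (ν.prod ν) {z | dist z.1 z.2 ≤ 2 * r}) := by ring
    _ = V⁻¹ * (ν.prod ν) {z | dist z.1 z.2 ≤ 2 * r} := by
        rw [ENNReal.mul_inv_cancel hV_ne_zero hV_ne_top, one_mul]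

theorem measure_le_liminf_setLIntegral_ballDensity (ν : Measure E) [SFinite ν] {U : Set E}
    (hU : IsOpen U) :
    ν U ≤ Filter.liminf (fun r => ∫⁻ x in U, ballDensity μ ν r x ∂μ) (𝓝[>] (0 : ℝ)) := by
  have indicator_le_liminf : U.indicator 1 ≤
      fun x => Filter.liminf (fun r => ballDensity μ (μ.restrict U) r x) (𝓝[>] (0 : ℝ)) :=
    indicator_le fun x hx => Filter.le_liminf_of_le (by isBoundedDefault)
      ((eventually_ballDensity_restrict_eq_one μ hU hx).mono fun r hr => hr.ge)
  calc ν U = ∫⁻ x, U.indicator 1 x ∂ν := (lintegral_indicator_one hU.measurableSet).symm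
    _ ≤ ∫⁻ x, Filter.liminf (fun r => ballDensity μ (μ.restrict U) r x) (𝓝[>] (0 : ℝ)) ∂ν :=
        lintegral_mono indicator_le_liminf
    _ ≤ Filter.liminf (fun r => ∫⁻ x, ballDensity μ (μ.restrict U) r x ∂ν) (𝓝[>] (0 : ℝ)) :=
        lintegral_liminf_le fun r => measurable_ballDensity μ (μ.restrict U) r
    _ = Filter.liminf (fun r => ∫⁻ x in U, ballDensity μ ν r x ∂μ) (𝓝[>] (0 : ℝ)) := by
        simp_rw [lintegral_ballDensity_comm μ ν (μ.restrict U)]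

theorem sq_measure_le_mul_lowerSqDensity_of_isOpen (ν : Measure E) [SFinite ν] {U : Set E}
    (hU : IsOpen U) (hU_fin : μ U ≠ ⊤) : ν U ^ 2 ≤ μ U * lowerSqDensity μ ν := by
  have sq_setLIntegral_le : ∀ r, (∫⁻ x in U, ballDensity μ ν r x ∂μ) ^ 2 ≤
      μ U * ∫⁻ x, ballDensity μ ν r x ^ 2 ∂μ := fun r => by
    refine (sq_lintegral_le_measure_univ_mul (measurable_ballDensity μ ν r).aemeasurable).trans ?_
    rw [Measure.restrict_apply_univ]
    exact mul_le_mul_right (setLIntegral_le_lintegral U _) _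
  calc ν U ^ 2
      ≤ Filter.liminf (fun r => ∫⁻ x in U, ballDensity μ ν r x ∂μ) (𝓝[>] (0 : ℝ)) ^ 2 := by
        gcongr
        exact measure_le_liminf_setLIntegral_ballDensity μ ν hU
    _ = Filter.liminf (fun r => (∫⁻ x in U, ballDensity μ ν r x ∂μ) ^ 2) (𝓝[>] (0 : ℝ)) :=
        (pow_left_mono 2).map_liminf_of_continuousAt _ (ENNReal.continuous_pow 2).continuousAt
    _ ≤ Filter.liminf (fun r => μ U * ∫⁻ x, ballDensity μ ν r x ^ 2 ∂μ) (𝓝[>] (0 : ℝ)) :=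
        Filter.liminf_le_liminf (.of_forall sq_setLIntegral_le)
    _ = μ U * lowerSqDensity μ ν := ENNReal.liminf_const_mul_of_ne_top hU_fin

theorem absolutelyContinuous_of_lowerSqDensity_ne_top {ν : Measure E} [SFinite ν]
    (h : lowerSqDensity μ ν ≠ ⊤) : ν ≪ μ := by
  intro A hA
  have sq_le : ∀ δ : ℝ≥0∞, δ ≠ 0 → ν A ^ 2 ≤ δ * lowerSqDensity μ ν := by
    intro δ hδ
    obtain ⟨U, hAU, hU, hUδ⟩ := A.exists_isOpen_lt_of_lt (μ := μ) δ (hA ▸ pos_iff_ne_zero.2 hδ)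
    calc ν A ^ 2 ≤ ν U ^ 2 := by gcongr
      _ ≤ μ U * lowerSqDensity μ ν :=
          sq_measure_le_mul_lowerSqDensity_of_isOpen μ ν hU (hUδ.trans_le le_top).ne
      _ ≤ δ * lowerSqDensity μ ν := by gcongr
  have tendsto_zero : Filter.Tendsto (fun n : ℕ => (n : ℝ≥0∞)⁻¹ * lowerSqDensity μ ν)
      Filter.atTop (𝓝 0) := by
    simpa using ENNReal.Tendsto.mul_const ENNReal.tendsto_inv_nat_nhds_zero (.inr h)
  have sq_le_zero : ν A ^ 2 ≤ 0 :=
    ge_of_tendsto' tendsto_zero fun n => sq_le _ (by simp)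
  simpa using sq_le_zero

end AddHaar

theorem lowerSqDensity_volume_pi_le {ι : Type*} [Fintype ι] (ν : Measure (ι → ℝ)) [SFinite ν] :
    lowerSqDensity volume ν ≤ Filter.liminf (fun ε : ℝ => (ENNReal.ofReal ε)⁻¹ ^ Fintype.card ι *
      (ν.prod ν) {z | dist z.1 z.2 ≤ ε}) (𝓝[>] 0) := by
  have half : Filter.Tendsto (fun ε : ℝ => ε / 2) (𝓝[>] 0) (𝓝[>] 0) := by
    refine tendsto_nhdsWithin_iff.2 ⟨?_, ?_⟩
    · exact ((continuous_id.div_const (2 : ℝ)).tendsto' 0 0 (by simp)).mono_left nhdsWithin_le_nhds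
    · filter_upwards [self_mem_nhdsWithin] with ε (hε : 0 < ε) using half_pos hε
  refine half.liminf_le_liminf_comp.trans (Filter.liminf_le_liminf ?_)
  filter_upwards [self_mem_nhdsWithin] with ε (hε : 0 < ε)
  have hvol : volume (closedBall (0 : ι → ℝ) (ε / 2)) = ENNReal.ofReal ε ^ Fintype.card ι := by
    rw [Real.volume_pi_closedBall _ (half_pos hε).le, mul_div_cancel₀ ε two_ne_zero,
      ENNReal.ofReal_pow hε.le]
  simpa only [Function.comp_apply, hvol, ENNReal.inv_pow, mul_div_cancel₀ ε two_ne_zero] using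
    lintegral_sq_ballDensity_le volume ν (half_pos hε)

theorem card_pairIdx (k : ℕ) : Fintype.card (PairIdx k) = k * (k + 1) / 2 := by
  have card_eq_sum : Fintype.card (PairIdx k) = ∑ j : Fin (k + 1), (j : ℕ) := by
    simp_rw [Fintype.card_subtype, Finset.card_filter, Fintype.sum_prod_type_right,
      ← Finset.card_filter, Finset.filter_gt_eq_Iio, Fin.card_Iio]
  rw [card_eq_sum, Fin.sum_univ_eq_sum_range (fun i => i), Finset.sum_range_id,
    Nat.add_sub_cancel, mul_comm]

section PairDist

variable {X : Type*} [PseudoMetricSpace X]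

/-- The vector of pairwise distances of a `(k+1)`-tuple in a pseudometric space, the analogue of
`simplexMap`. -/
def pairDist (k : ℕ) (x : Fin (k + 1) → X) : PairIdx k → ℝ :=
  fun p => dist (x p.1.1) (x p.1.2)

/-- The analogue of `thickLiminf` in a pseudometric space. -/
def congrLiminf [MeasurableSpace X] (k : ℕ) (μ : Measure X) : ℝ≥0∞ :=
  Filter.liminf
    (fun ε : ℝ => (ENNReal.ofReal ε)⁻¹ ^ (k * (k + 1) / 2) *
      ((Measure.pi fun _ : Fin (k + 1) => μ).prod (Measure.pi fun _ : Fin (k + 1) => μ))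
        {z | ∀ i j, i < j → |dist (z.1 i) (z.1 j) - dist (z.2 i) (z.2 j)| ≤ ε})
    (𝓝[>] 0)

theorem dist_pairDist_le_iff {k : ℕ} {ε : ℝ} (hε : 0 ≤ ε) (x y : Fin (k + 1) → X) :
    dist (pairDist k x) (pairDist k y) ≤ ε ↔
      ∀ i j, i < j → |dist (x i) (x j) - dist (y i) (y j)| ≤ ε := by
  simp only [dist_pi_le_iff hε, Subtype.forall, Prod.forall, pairDist, Real.dist_eq]

variable [SecondCountableTopology X] [MeasurableSpace X] [OpensMeasurableSpace X]

theorem measurable_pairDist (k : ℕ) : Measurable (pairDist k : (Fin (k + 1) → X) → _) := by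
  unfold pairDist
  fun_prop

theorem lowerSqDensity_map_pairDist_le (k : ℕ) (μ : Measure X) [SigmaFinite μ] :
    lowerSqDensity volume ((Measure.pi fun _ : Fin (k + 1) => μ).map (pairDist k)) ≤
      congrLiminf k μ := by
  refine (lowerSqDensity_volume_pi_le _).trans_eq (Filter.liminf_congr ?_)
  filter_upwards [self_mem_nhdsWithin] with ε (hε : 0 < ε)
  have hs : MeasurableSet {z : (PairIdx k → ℝ) × (PairIdx k → ℝ) | dist z.1 z.2 ≤ ε} :=
    measurableSet_le measurable_dist measurable_const
  have hm : Measurable (pairDist k : (Fin (k + 1) → X) → _) := measurable_pairDist k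
  rw [card_pairIdx, Measure.map_prod_map _ _ hm hm, Measure.map_apply (hm.prodMap hm) hs]
  simp only [preimage_ofPred_eq, Prod.map_fst, Prod.map_snd, dist_pairDist_le_iff hε.le]

theorem stmt17_general (k : ℕ) (μ : Measure X) [SigmaFinite μ] (h : congrLiminf k μ < ⊤) :
    (Measure.pi fun _ : Fin (k + 1) => μ).map (pairDist k) ≪ volume ∧
      ∫⁻ t, ((Measure.pi fun _ : Fin (k + 1) => μ).map (pairDist k)).rnDeriv volume t ^ 2 ≤
        congrLiminf k μ :=
  have h_le := lowerSqDensity_map_pairDist_le k μ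
  ⟨absolutelyContinuous_of_lowerSqDensity_ne_top volume (h_le.trans_lt h).ne,
    (lintegral_sq_rnDeriv_le_lowerSqDensity volume _).trans h_le⟩

end PairDist

theorem stmt17 (d k : ℕ) (hd : 2 ≤ d) (hk1 : 1 ≤ k) (hkd : k ≤ d) :
    ∃ c : ℝ≥0∞, c ≠ ⊤ ∧
      ∀ (E : Set (Pt d)), IsCompact E →
        ∀ (μ : Measure (Pt d)), IsFiniteMeasure μ → μ Eᶜ = 0 →
          thickLiminf d k μ < ⊤ →
            nuSimplex d k μ ≪ volume ∧
              ∫⁻ t, ((nuSimplex d k μ).rnDeriv volume t) ^ 2 ∂volume ≤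
                c * thickLiminf d k μ :=
  ⟨1, ENNReal.one_ne_top, fun _ _ μ _ _ h => by
    rw [one_mul]
    exact stmt17_general k μ h⟩
end
end
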